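/- For every positive integer u with u ≡ 0 or 1 (mod 4) and u ≥ 4, setting v = 12u+1, one has J_3[v] = I_3[v]. -/

import Mathlib

/-!
Write `b = u(12u+1)` for the number of blocks of an `S(2,4,12u+1)`; the claim is that the possible
numbers of common blocks are `0, …, b-8` and `b`.

**Necessity.** Deleting the common blocks from three designs leaves three pairwise disjoint sets of
blocks covering the same pairs. If these sets are nonempty, they have at least 8 blocks
(`Flower.trade_bound`). Indeed each point of such a trade is on at least two blocks of each set. If
each point of some block `P₀` is on at least three, there are `1 + 4·2 = 9` blocks. If a point `x`
is on just two, `P` and `Q`, then the three sets induce three different splittings of the six other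
points of `P ∪ Q` into triples. The second and third splittings join at least six of the nine pairs
between `P \ {x}` and `Q \ {x}` (`Flower.cross_pairs`), and in the first set these pairs lie in
different blocks avoiding `x`, which gives `2 + 6 = 8` blocks. The total number of blocks comes
from counting pairs (`Flower.IsDec.card_mul`).

**Sufficiency.** A 4-GDD of type `3^u` exists for every `u ≡ 0, 1 (mod 4)` (`Flower.R_all`): the set
of such `u` is PBD-closed (`Flower.R.pbd`), so that from a transversal design with five groups of
size `m`, one of them truncated to size `s`, existence for `m`, `s`, 4 and 5 implies existence for
`4m + s` (`Flower.R.four_mul_add`). The transversal designs are linear ones over products of finite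
fields; a few small orders are done directly. Replace each point of the GDD by four points and each
block by a triple of `TD(4,4)`s sharing 0, 1, 2 or 16 blocks (`Flower.Fl.inflate`), then fill each
group, now of size 12, and a common point `∞` with a triple of projective planes of order 3 sharing
0, …, 5 or 13 lines (`Flower.Fl.complete`). The numbers of common blocks add up, and all of
`0, …, b-8` and `b` are such sums (`Flower.exists_sum_plane`, `Flower.exists_sum_td`,
`Flower.fl_top`).
-/

/-- The number of blocks of an `S(2,4,v)` design: `b_v = v(v-1)/12`. -/
def steinerBlockCount (v : ℕ) : ℕ := v * (v - 1) / 12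

/-- `B` is the block set of a Steiner system `S(2,4,·)` on the point set `V`:
every block is a 4-element subset of `V` and every pair of distinct points of `V`
lies in exactly one block. -/
def IsS24 {α : Type} [DecidableEq α] (V : Finset α) (B : Finset (Finset α)) : Prop :=
  (∀ b ∈ B, b ⊆ V ∧ b.card = 4) ∧
  ∀ x y : α, x ∈ V → y ∈ V → x ≠ y → ∃! b, b ∈ B ∧ x ∈ b ∧ y ∈ b

/-- Three block sets have pairwise-coincident intersections. -/
def CoincidentInts {α : Type} [DecidableEq α] (B1 B2 B3 : Finset (Finset α)) : Prop :=
  B1 ∩ B2 = B1 ∩ B3 ∧ B1 ∩ B2 = B2 ∩ B3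

/-- `J_3[v]`: the set of `k` such that there exist three `S(2,4,v)` designs on a common
`v`-element point set whose pairwise intersections coincide and have cardinality `k`. -/
def J3 (v : ℕ) : Set ℕ :=
  {k | ∃ B1 B2 B3 : Finset (Finset (Fin v)),
    IsS24 Finset.univ B1 ∧ IsS24 Finset.univ B2 ∧ IsS24 Finset.univ B3 ∧
    CoincidentInts B1 B2 B3 ∧ (B1 ∩ B2 ∩ B3).card = k}

/-- `I_3[v] = {0,1,...,b_v} \ {b_v-7, ..., b_v-1}`. -/
def I3 (v : ℕ) : Set ℕ :=
  {k | k ≤ steinerBlockCount v} \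
    {steinerBlockCount v - 7, steinerBlockCount v - 6, steinerBlockCount v - 5,
     steinerBlockCount v - 4, steinerBlockCount v - 3, steinerBlockCount v - 2,
     steinerBlockCount v - 1}

namespace Flower

open Finset

/-! ### Decompositions of graphs into copies of `K₄` -/

/-- `B` is the block set of a decomposition of the graph `G` into copies of `K₄`: blocks are
4-cliques of `G`, and each edge lies in exactly one of them. For `G = ⊤` these are the `S(2,4,v)`
designs, for a complete multipartite `G` the 4-GDDs (and transversal designs). -/
structure IsDec {V : Type} (G : SimpleGraph V) (B : Finset (Finset V)) : Prop where
  card : ∀ b ∈ B, b.card = 4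
  clique : ∀ b ∈ B, ∀ x ∈ b, ∀ y ∈ b, x ≠ y → G.Adj x y
  cover : ∀ x y, G.Adj x y → ∃! b, b ∈ B ∧ x ∈ b ∧ y ∈ b

/-- `G` has some `K₄`-decomposition. -/
def Dec {V : Type} (G : SimpleGraph V) : Prop := ∃ B, IsDec G B

/-- `G` has three `K₄`-decompositions any two of which share precisely one and the same set of
`k` blocks. -/
def Fl {V : Type} [DecidableEq V] (G : SimpleGraph V) (k : ℕ) : Prop :=
  ∃ (B : Fin 3 → Finset (Finset V)) (C : Finset (Finset V)),
    (∀ i, IsDec G (B i)) ∧ (∀ i j, i ≠ j → B i ∩ B j = C) ∧ C.card = k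

lemma IsDec.exists_adj {V : Type} {G : SimpleGraph V} {B : Finset (Finset V)} (h : IsDec G B)
    {b : Finset V} (hb : b ∈ B) : ∃ x ∈ b, ∃ y ∈ b, G.Adj x y := by
  have h4 := h.card b hb
  obtain ⟨x, hx, y, hy, hxy⟩ := Finset.one_lt_card.1 (by omega : 1 < b.card)
  exact ⟨x, hx, y, hy, h.clique b hb x hx y hy hxy⟩

section
variable {V W ι : Type} [DecidableEq V] [DecidableEq W] [DecidableEq ι]

lemma IsDec.fl {G : SimpleGraph V} {B : Finset (Finset V)} (h : IsDec G B) : Fl G B.card :=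
  ⟨fun _ => B, B, fun _ => h, fun _ _ _ => by simp, rfl⟩

lemma Fl.dec {G : SimpleGraph V} {k : ℕ} (h : Fl G k) : Dec G := by
  obtain ⟨B, C, hB, -⟩ := h
  exact ⟨B 0, hB 0⟩

lemma Fl.bot : Fl (⊥ : SimpleGraph V) 0 := by
  refine ⟨fun _ => ∅, ∅, fun _ => ⟨?_, ?_, ?_⟩, ?_, ?_⟩ <;> simp

lemma IsDec.sup {G H : SimpleGraph V} {B D : Finset (Finset V)} (hG : IsDec G B)
    (hH : IsDec H D) (hd : ∀ x y, G.Adj x y → ¬ H.Adj x y) : IsDec (G ⊔ H) (B ∪ D) := by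
  refine ⟨?_, ?_, ?_⟩
  · intro b hb
    rcases Finset.mem_union.1 hb with hb | hb
    · exact hG.card b hb
    · exact hH.card b hb
  · intro b hb x hx y hy hxy
    rcases Finset.mem_union.1 hb with hb | hb
    · exact Or.inl (hG.clique b hb x hx y hy hxy)
    · exact Or.inr (hH.clique b hb x hx y hy hxy)
  · rintro x y hadj
    have hne : x ≠ y := hadj.ne
    rcases hadj with h | h
    · obtain ⟨b, ⟨hb, hx, hy⟩, hu⟩ := hG.cover x y h
      refine ⟨b, ⟨Finset.mem_union_left _ hb, hx, hy⟩, ?_⟩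
      rintro c ⟨hc, hxc, hyc⟩
      rcases Finset.mem_union.1 hc with hc | hc
      · exact hu c ⟨hc, hxc, hyc⟩
      · exact absurd (hH.clique c hc x hxc y hyc hne) (hd x y h)
    · obtain ⟨b, ⟨hb, hx, hy⟩, hu⟩ := hH.cover x y h
      refine ⟨b, ⟨Finset.mem_union_right _ hb, hx, hy⟩, ?_⟩
      rintro c ⟨hc, hxc, hyc⟩
      rcases Finset.mem_union.1 hc with hc | hc
      · exact absurd h (hd x y (hG.clique c hc x hxc y hyc hne))
      · exact hu c ⟨hc, hxc, hyc⟩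

/-- Blocks of edge-disjoint graphs are distinct, so intersection sizes add under edge-disjoint
unions. -/
lemma Fl.sup {G H : SimpleGraph V} {k l : ℕ} (hG : Fl G k) (hH : Fl H l)
    (hd : ∀ x y, G.Adj x y → ¬ H.Adj x y) : Fl (G ⊔ H) (k + l) := by
  obtain ⟨B, C, hB, hC, rfl⟩ := hG
  obtain ⟨B', C', hB', hC', rfl⟩ := hH
  have key : ∀ i j b, b ∈ B i → b ∈ B' j → False := by
    intro i j b hb hb'
    obtain ⟨x, hx, y, hy, hxy⟩ := (hB i).exists_adj hb
    exact hd x y hxy ((hB' j).clique b hb' x hx y hy hxy.ne)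
  refine ⟨fun i => B i ∪ B' i, C ∪ C', fun i => (hB i).sup (hB' i) hd, ?_, ?_⟩
  · intro i j hij
    rw [← hC i j hij, ← hC' i j hij]
    ext b
    have h1 := key i j b
    have h2 := key j i b
    simp only [Finset.mem_union, Finset.mem_inter]
    tauto
  · refine Finset.card_union_of_disjoint (Finset.disjoint_left.2 fun b hb hb' => ?_)
    rw [← hC 0 1 (by decide)] at hb
    rw [← hC' 0 1 (by decide)] at hb'
    exact key 0 0 b (Finset.mem_inter.1 hb).1 (Finset.mem_inter.1 hb').1

lemma Fl.biUnion (s : Finset ι) (G : ι → SimpleGraph V) (k : ι → ℕ)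
    (hd : ∀ i ∈ s, ∀ j ∈ s, ∀ x y, (G i).Adj x y → (G j).Adj x y → i = j)
    (h : ∀ i ∈ s, Fl (G i) (k i)) (H : SimpleGraph V)
    (hH : ∀ x y, H.Adj x y ↔ ∃ i ∈ s, (G i).Adj x y) : Fl H (∑ i ∈ s, k i) := by
  induction s using Finset.induction_on generalizing H with
  | empty =>
    have : H = ⊥ := by ext x y; simp [hH]
    rw [this]; exact Fl.bot
  | insert a s ha ih =>
    rw [Finset.sum_insert ha]
    let H' : SimpleGraph V := ⨆ i ∈ s, G i
    have hH' : ∀ x y, H'.Adj x y ↔ ∃ i ∈ s, (G i).Adj x y := by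
      intro x y; simp [H', SimpleGraph.iSup_adj]
    have e : H = G a ⊔ H' := by
      ext x y; simp [hH, hH']
    rw [e]
    refine Fl.sup (h a (by simp)) (ih ?_ ?_ H' hH') ?_
    · intro i hi j hj; exact hd i (by simp [hi]) j (by simp [hj])
    · intro i hi; exact h i (by simp [hi])
    · intro x y hx hy
      obtain ⟨i, hi, hxy⟩ := (hH' x y).1 hy
      have := hd a (by simp) i (by simp [hi]) x y hx hxy
      exact ha (this ▸ hi)

lemma Dec.biUnion (s : Finset ι) (G : ι → SimpleGraph V)
    (hd : ∀ i ∈ s, ∀ j ∈ s, ∀ x y, (G i).Adj x y → (G j).Adj x y → i = j)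
    (h : ∀ i ∈ s, Dec (G i)) (H : SimpleGraph V)
    (hH : ∀ x y, H.Adj x y ↔ ∃ i ∈ s, (G i).Adj x y) : Dec H := by
  classical
  have h' : ∀ i, ∃ k, i ∈ s → Fl (G i) k := by
    intro i
    by_cases hi : i ∈ s
    · obtain ⟨B, hB⟩ := h i hi
      exact ⟨_, fun _ => hB.fl⟩
    · exact ⟨0, fun h => absurd h hi⟩
  choose k hk using h'
  exact (Fl.biUnion s G k hd hk H hH).dec

lemma IsDec.map {G : SimpleGraph V} {B : Finset (Finset V)} (h : IsDec G B) (f : V ↪ W) :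
    IsDec (G.map f) (B.image (Finset.map f)) := by
  refine ⟨?_, ?_, ?_⟩
  · intro b hb
    obtain ⟨c, hc, rfl⟩ := Finset.mem_image.1 hb
    rw [Finset.card_map, h.card c hc]
  · intro b hb x hx y hy hxy
    obtain ⟨c, hc, rfl⟩ := Finset.mem_image.1 hb
    obtain ⟨x', hx', rfl⟩ := Finset.mem_map.1 hx
    obtain ⟨y', hy', rfl⟩ := Finset.mem_map.1 hy
    rw [SimpleGraph.map_adj]
    exact ⟨x', y', h.clique c hc x' hx' y' hy' (fun e => hxy (by rw [e])), rfl, rfl⟩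
  · intro x y hxy
    rw [SimpleGraph.map_adj] at hxy
    obtain ⟨x, y, hxy, rfl, rfl⟩ := hxy
    obtain ⟨b, ⟨hb, hx, hy⟩, hu⟩ := h.cover x y hxy
    refine ⟨b.map f, ⟨Finset.mem_image_of_mem _ hb, by simpa, by simpa⟩, ?_⟩
    rintro c ⟨hc, hxc, hyc⟩
    obtain ⟨c', hc', rfl⟩ := Finset.mem_image.1 hc
    rw [hu c' ⟨hc', by simpa using hxc, by simpa using hyc⟩]

lemma Fl.map {G : SimpleGraph V} {k : ℕ} (h : Fl G k) (f : V ↪ W) : Fl (G.map f) k := by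
  obtain ⟨B, C, hB, hC, rfl⟩ := h
  refine ⟨fun i => (B i).image (Finset.map f), C.image (Finset.map f), fun i => (hB i).map f,
    ?_, ?_⟩
  · intro i j hij
    rw [← hC i j hij, Finset.image_inter _ _ (Finset.map_injective f)]
  · rw [Finset.card_image_of_injective _ (Finset.map_injective f)]

lemma Dec.map {G : SimpleGraph V} (h : Dec G) (f : V ↪ W) : Dec (G.map f) := by
  obtain ⟨B, hB⟩ := h
  exact ⟨_, hB.map f⟩

lemma Fl.iso {G : SimpleGraph V} {H : SimpleGraph W} {k : ℕ} (h : Fl G k) (e : G ≃g H) :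
    Fl H k := by
  have : G.map e.toEquiv.toEmbedding = H := by
    ext x y
    rw [SimpleGraph.map_adj]
    constructor
    · rintro ⟨x, y, hxy, rfl, rfl⟩
      exact e.map_adj_iff.2 hxy
    · intro hxy
      exact ⟨e.symm x, e.symm y, e.symm.map_adj_iff.2 hxy, by simp, by simp⟩
  rw [← this]; exact h.map _

lemma Dec.iso {G : SimpleGraph V} {H : SimpleGraph W} (h : Dec G) (e : G ≃g H) : Dec H := by
  obtain ⟨B, hB⟩ := h
  exact (hB.fl.iso e).dec

end

/-- The complete multipartite graph on `U × W` whose parts are the fibres `{p} × W`. -/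
def part (U W : Type) : SimpleGraph (U × W) where
  Adj x y := x.1 ≠ y.1
  symm := ⟨fun _ _ h => h.symm⟩
  loopless := ⟨fun _ h => h rfl⟩

lemma part_adj {U W : Type} {x y : U × W} : (part U W).Adj x y ↔ x.1 ≠ y.1 := Iff.rfl

/-- Relabelling the parts and the points within parts. -/
def partIso {U U' W W' : Type} (e : U ≃ U') (e' : W ≃ W') : part U W ≃g part U' W' where
  toEquiv := e.prodCongr e'
  map_rel_iff' := by
    intro a b
    change ¬ (e a.1 = e b.1) ↔ ¬ (a.1 = b.1)
    rw [e.injective.eq_iff]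

/-- There is a 4-GDD of type `3^u` (equivalently, an `S(2,4,3u+1)`). -/
def R (u : ℕ) : Prop := Dec (part (Fin u) (Fin 3))

lemma R.dec {U : Type} [Fintype U] [DecidableEq U] (h : R (Fintype.card U)) :
    Dec (part U (Fin 3)) :=
  Dec.iso h (partIso (Fintype.equivFin U).symm (Equiv.refl _))

lemma R.of_dec {U : Type} [Fintype U] [DecidableEq U] (h : Dec (part U (Fin 3))) :
    R (Fintype.card U) :=
  Dec.iso h (partIso (Fintype.equivFin U) (Equiv.refl _))

/-- `R` is PBD-closed: a linear space all of whose lines have sizes in `R` has its number of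
points in `R`. Put a GDD on `L × Fin 3` for each line `L`. -/
lemma R.pbd {U : Type} [Fintype U] [DecidableEq U] (L : Finset (Finset U))
    (hL : ∀ x y, x ≠ y → ∃! b, b ∈ L ∧ x ∈ b ∧ y ∈ b) (hR : ∀ b ∈ L, R b.card) :
    R (Fintype.card U) := by
  apply R.of_dec
  let f : (b : Finset U) → (b × Fin 3) ↪ (U × Fin 3) := fun b =>
    (Function.Embedding.subtype _).prodMap (Function.Embedding.refl _)
  have adj : ∀ (b : Finset U) (x y : U × Fin 3),
      ((part b (Fin 3)).map (f b)).Adj x y ↔ x.1 ∈ b ∧ y.1 ∈ b ∧ x.1 ≠ y.1 := by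
    intro b x y
    rw [SimpleGraph.map_adj]
    constructor
    · rintro ⟨⟨⟨p, hp⟩, i⟩, ⟨⟨q, hq⟩, j⟩, h, rfl, rfl⟩
      exact ⟨hp, hq, fun e => h (Subtype.ext e)⟩
    · rintro ⟨hx, hy, hxy⟩
      exact ⟨⟨⟨x.1, hx⟩, x.2⟩, ⟨⟨y.1, hy⟩, y.2⟩, fun e => hxy (congrArg Subtype.val e), rfl, rfl⟩
  refine Dec.biUnion L (fun b => (part b (Fin 3)).map (f b)) ?_ ?_ _ ?_
  · intro b hb c hc x y h1 h2
    rw [adj] at h1 h2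
    exact (hL x.1 y.1 h1.2.2).unique ⟨hb, h1.1, h1.2.1⟩ ⟨hc, h2.1, h2.2.1⟩
  · intro b hb
    refine Dec.map (R.dec ?_) _
    rw [Fintype.card_coe]; exact hR b hb
  · intro x y
    simp only [adj]
    rw [part_adj]
    constructor
    · intro h
      obtain ⟨b, ⟨hb, hx, hy⟩, -⟩ := hL x.1 y.1 h
      exact ⟨b, hb, hx, hy, h⟩
    · rintro ⟨b, -, -, -, h⟩; exact h

/-! ### Small designs, given by bit masks and checked by evaluation -/

/-- The set of positions `< n` of the nonzero binary digits of `m`. -/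
def bits (n m : ℕ) : Finset (Fin n) := Finset.univ.filter fun i => m.testBit i

/-- Group `0, …, n-1` into consecutive parts of size `s`. The check says: among the sets coded by
the masks in `L`, exactly one contains `i` and `j` if these lie in different parts, and none does
if they are distinct points of the same part. -/
def linCheck (n s : ℕ) (L : List ℕ) : Bool :=
  (List.range n).all fun i =>
    let Li := L.filter fun m => m.testBit i
    (List.range n).all fun j =>
      i == j || (Li.filter fun m => m.testBit j).length == if i / s = j / s then 0 else 1

/-- The mask of a list of distinct positions. -/
def mask (l : List ℕ) : ℕ := (l.map fun i => 2 ^ i).sum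

lemma mem_bits {n m : ℕ} {i : Fin n} : i ∈ bits n m ↔ m.testBit i = true := by
  simp [bits]

lemma bits_inj {n m m' : ℕ} (h : m < 2 ^ n) (h' : m' < 2 ^ n) (e : bits n m = bits n m') :
    m = m' := by
  apply Nat.eq_of_testBit_eq
  intro i
  by_cases hi : i < n
  · have := congrArg (fun s => (⟨i, hi⟩ : Fin n) ∈ s) e
    simp only [mem_bits, eq_iff_iff] at this
    exact Bool.eq_iff_iff.2 this
  · push Not at hi
    have hp : 2 ^ n ≤ 2 ^ i := Nat.pow_le_pow_right (by norm_num) hi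
    rw [Nat.testBit_lt_two_pow (h.trans_le hp), Nat.testBit_lt_two_pow (h'.trans_le hp)]

lemma linCheck_spec {n s : ℕ} {L : List ℕ} (h : linCheck n s L = true) (i j : Fin n)
    (hij : i ≠ j) :
    (L.filter fun m => m.testBit i && m.testBit j).length =
      if (i : ℕ) / s = (j : ℕ) / s then 0 else 1 := by
  simp only [linCheck, List.all_eq_true, List.mem_range] at h
  have := h i i.2 j j.2
  have hne : ((i : ℕ) == (j : ℕ)) = false := by simpa [Fin.ext_iff] using hij
  rw [hne, Bool.false_or, beq_iff_eq, List.filter_filter] at this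
  rw [← this]
  congr 2
  funext m
  exact Bool.and_comm _ _

lemma linCheck_cover {n s : ℕ} {L : List ℕ} (h : linCheck n s L = true) (i j : Fin n)
    (hij : (i : ℕ) / s ≠ (j : ℕ) / s) :
    ∃! b, b ∈ L.toFinset.image (bits n) ∧ i ∈ b ∧ j ∈ b := by
  have hs := linCheck_spec h i j (fun e => hij (by rw [e]))
  rw [if_neg hij, List.length_eq_one_iff] at hs
  obtain ⟨m, hm⟩ := hs
  have hmem : ∀ m', (m' ∈ L ∧ i ∈ bits n m' ∧ j ∈ bits n m') ↔ m' = m := by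
    intro m'
    rw [← List.mem_singleton, ← hm, List.mem_filter, mem_bits, mem_bits, Bool.and_eq_true]
  have h1 := (hmem m).2 rfl
  refine ⟨bits n m, ⟨Finset.mem_image.2 ⟨m, by simpa using h1.1, rfl⟩, h1.2⟩, ?_⟩
  rintro b ⟨hb, hi, hj⟩
  obtain ⟨m', hm', rfl⟩ := Finset.mem_image.1 hb
  rw [(hmem m').1 ⟨by simpa using hm', hi, hj⟩]

/-- The block set on `Fin u × Fin s` coded by a list of masks, the point `(p, i)` having
position `s * p + i`. -/
def blocks (u s : ℕ) (L : List ℕ) : Finset (Finset (Fin u × Fin s)) :=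
  L.toFinset.image fun m => (bits (u * s) m).map finProdFinEquiv.symm.toEmbedding

lemma isDec_of_check {u s : ℕ} (L : List ℕ) (h : linCheck (u * s) s L = true)
    (h4 : ∀ m ∈ L, (bits (u * s) m).card = 4) : IsDec (part (Fin u) (Fin s)) (blocks u s L) := by
  have hdiv : ∀ x : Fin u × Fin s, ((finProdFinEquiv x : Fin (u * s)) : ℕ) / s = x.1 := by
    intro x
    have hs : 0 < s := x.2.pos
    simp [finProdFinEquiv_apply_val, Nat.add_mul_div_left _ _ hs]
  have hmem : ∀ (x : Fin u × Fin s) m,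
      x ∈ (bits (u * s) m).map finProdFinEquiv.symm.toEmbedding ↔
        finProdFinEquiv x ∈ bits (u * s) m := by
    intro x m
    simp [Finset.mem_map_equiv]
  refine ⟨?_, ?_, ?_⟩
  · intro b hb
    obtain ⟨m, hm, rfl⟩ := Finset.mem_image.1 hb
    rw [Finset.card_map]
    exact h4 m (by simpa using hm)
  · intro b hb x hx y hy hxy
    obtain ⟨m, hm, rfl⟩ := Finset.mem_image.1 hb
    simp only [hmem] at hx hy
    rw [part_adj]
    intro e
    have hs := linCheck_spec h (finProdFinEquiv x) (finProdFinEquiv y)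
      (fun e => hxy (finProdFinEquiv.injective e))
    rw [hdiv, hdiv, e, if_pos rfl, List.length_eq_zero_iff, List.filter_eq_nil_iff] at hs
    exact hs m (by simpa using hm) (by rw [mem_bits.1 hx, mem_bits.1 hy]; rfl)
  · intro x y hxy
    have hc := linCheck_cover h (finProdFinEquiv x) (finProdFinEquiv y)
      (by rw [hdiv, hdiv]; exact fun e => hxy (Fin.ext e))
    obtain ⟨b, ⟨hb, hx, hy⟩, hu⟩ := hc
    obtain ⟨m, hm, rfl⟩ := Finset.mem_image.1 hb
    refine ⟨_, ⟨Finset.mem_image_of_mem _ hm, (hmem _ _).2 hx, (hmem _ _).2 hy⟩, ?_⟩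
    rintro c ⟨hc, hxc, hyc⟩
    obtain ⟨m', hm', rfl⟩ := Finset.mem_image.1 hc
    rw [hu (bits (u * s) m') ⟨Finset.mem_image_of_mem _ hm', (hmem _ _).1 hxc, (hmem _ _).1 hyc⟩]

/-- All the conditions on lists of masks `C` (common blocks) and `L0`, `L1`, `L2` (remaining
blocks) used to certify three decompositions meeting pairwise in `C`. -/
def flCheck (u s : ℕ) (C L0 L1 L2 : List ℕ) : Bool :=
  [L0, L1, L2].all (fun L => linCheck (u * s) s (C ++ L) &&
    (C ++ L).all fun m => m < 2 ^ (u * s) && (bits (u * s) m).card == 4) &&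
  L0.all (fun m => !L1.elem m && !L2.elem m) && L1.all (fun m => !L2.elem m) &&
  decide C.Nodup

lemma fl_of_check {u s : ℕ} (C L0 L1 L2 : List ℕ) (h : flCheck u s C L0 L1 L2 = true) :
    Fl (part (Fin u) (Fin s)) C.length := by
  simp only [flCheck, Bool.and_eq_true, List.all_eq_true, decide_eq_true_eq, beq_iff_eq,
    List.mem_cons, List.not_mem_nil, or_false, forall_eq_or_imp, forall_eq,
    Bool.not_eq_true', List.elem_eq_contains, List.contains_eq_mem, decide_eq_false_iff_not] at h
  obtain ⟨⟨⟨⟨⟨c0, d0⟩, ⟨c1, d1⟩, ⟨c2, d2⟩⟩, h0⟩, h1⟩, hn⟩ := h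
  let F : ℕ → Finset (Fin u × Fin s) := fun m =>
    (bits (u * s) m).map finProdFinEquiv.symm.toEmbedding
  have hF : Set.InjOn F {m | m < 2 ^ (u * s)} := by
    intro m hm m' hm' e
    exact bits_inj hm hm' (Finset.map_injective _ e)
  have inter : ∀ L L' : List ℕ, (∀ m ∈ C ++ L, m < 2 ^ (u * s)) →
      (∀ m ∈ C ++ L', m < 2 ^ (u * s)) → (∀ m ∈ L, m ∉ L') →
      blocks u s (C ++ L) ∩ blocks u s (C ++ L') = blocks u s C := by
    intro L L' b b' hd
    unfold blocks
    change Finset.image F _ ∩ Finset.image F _ = Finset.image F _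
    rw [← Finset.image_inter_of_injOn]
    · congr 1
      ext m
      have := hd m
      simp only [Finset.mem_inter, List.mem_toFinset, List.mem_append]
      tauto
    · refine hF.mono ?_
      rintro m (hm | hm)
      · exact b m (by simpa using hm)
      · exact b' m (by simpa using hm)
  have b0 := fun m hm => (d0 m hm).1
  have b1 := fun m hm => (d1 m hm).1
  have b2 := fun m hm => (d2 m hm).1
  have i01 := inter L0 L1 b0 b1 fun m hm => (h0 m hm).1
  have i02 := inter L0 L2 b0 b2 fun m hm => (h0 m hm).2
  have i12 := inter L1 L2 b1 b2 h1
  refine ⟨![blocks u s (C ++ L0), blocks u s (C ++ L1), blocks u s (C ++ L2)], blocks u s C,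
    ?_, ?_, ?_⟩
  · intro i
    fin_cases i
    · exact isDec_of_check _ c0 fun m hm => (d0 m hm).2
    · exact isDec_of_check _ c1 fun m hm => (d1 m hm).2
    · exact isDec_of_check _ c2 fun m hm => (d2 m hm).2
  · intro i j hij
    fin_cases i <;> fin_cases j <;> first | exact absurd rfl hij | skip
    · exact i01
    · exact i02
    · exact (Finset.inter_comm _ _).trans i01
    · exact i12
    · exact (Finset.inter_comm _ _).trans i02
    · exact (Finset.inter_comm _ _).trans i12
  · unfold blocks
    rw [Finset.card_image_of_injOn, List.toFinset_card_of_nodup hn]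
    refine hF.mono fun m hm => b0 m ?_
    simp only [Finset.mem_coe, List.mem_toFinset] at hm
    simp [hm]

/-! Three projective planes of order 3 on 13 points sharing `k = 0, …, 5` or 13 lines. -/

lemma plane_0 : Fl (part (Fin 13) (Fin 1)) 0 :=
  fl_of_check
    []
    [177, 354, 523, 708, 1046, 1416, 2092, 2832, 3137, 4184, 4357, 5664, 6274]
    [27, 226, 774, 1100, 1424, 1569, 2100, 2369, 2696, 4229, 4392, 4688, 7170]
    [228, 337, 568, 643, 1037, 1314, 2070, 2440, 3648, 4170, 4868, 5264, 6177]
    (by decide +kernel)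

lemma plane_1 : Fl (part (Fin 13) (Fin 1)) 1 :=
  fl_of_check
    [177]
    [354, 523, 708, 1046, 1416, 2092, 2832, 3137, 4184, 4357, 5664, 6274]
    [198, 282, 833, 1128, 1556, 2061, 2594, 3456, 4388, 4744, 5123, 6224]
    [204, 898, 1031, 1376, 1560, 2090, 2324, 2625, 4178, 4361, 4644, 7296]
    (by decide +kernel)

lemma plane_2 : Fl (part (Fin 13) (Fin 1)) 2 :=
  fl_of_check
    [523, 4184]
    [177, 354, 708, 1046, 1416, 2092, 2832, 3137, 4357, 5664, 6274]
    [172, 305, 836, 1122, 1680, 2070, 2241, 3336, 4482, 5125, 6688]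
    [612, 912, 1045, 1218, 1320, 2098, 2188, 2369, 4257, 4358, 7680]
    (by decide +kernel)

lemma plane_3 : Fl (part (Fin 13) (Fin 1)) 3 :=
  fl_of_check
    [177, 523, 708]
    [354, 1046, 1416, 2092, 2832, 3137, 4184, 4357, 5664, 6274]
    [284, 1106, 1824, 2086, 2369, 3208, 4200, 4482, 5125, 6672]
    [300, 1122, 1808, 2136, 2434, 3077, 4118, 4417, 5256, 6688]
    (by decide +kernel)

lemma plane_4 : Fl (part (Fin 13) (Fin 1)) 4 :=
  fl_of_check
    [354, 523, 708, 2092]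
    [177, 1046, 1416, 2832, 3137, 4184, 4357, 5664, 6274]
    [408, 1285, 1584, 2129, 3202, 4118, 4257, 5192, 6912]
    [277, 1112, 1185, 2194, 3840, 4488, 4656, 5126, 6209]
    (by decide +kernel)

lemma plane_5 : Fl (part (Fin 13) (Fin 1)) 5 :=
  fl_of_check
    [177, 523, 708, 3137, 4357]
    [354, 1046, 1416, 2092, 2832, 4184, 5664, 6274]
    [338, 1052, 1824, 2086, 2440, 4200, 5250, 6672]
    [360, 1062, 1808, 2076, 2434, 4178, 5256, 6688]
    (by decide +kernel)

lemma plane_13 : Fl (part (Fin 13) (Fin 1)) 13 :=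
  fl_of_check
    [177, 354, 523, 708, 1046, 1416, 2092, 2832, 3137, 4184, 4357, 5664, 6274]
    [] [] [] (by decide +kernel)

/-! Three transversal designs `TD(4,4)` sharing `k = 0, 1, 2` or 16 blocks. -/

lemma td_0 : Fl (part (Fin 4) (Fin 4)) 0 :=
  fl_of_check
    []
    [4369, 4680, 5250, 6180, 8516, 8722, 9256, 10369, 16776, 16929, 17428, 18498, 33058, 33412,
     33857, 34840]
    [4482, 4628, 5185, 6184, 8520, 8737, 9348, 10258, 16657, 17032, 17442, 18500, 33060, 33346,
     33816, 34945]
    [4488, 4642, 5188, 6161, 8481, 8836, 9234, 10312, 16660, 16961, 17448, 18562, 33090, 33304,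
     33921, 34852]
    (by decide +kernel)

lemma td_1 : Fl (part (Fin 4) (Fin 4)) 1 :=
  fl_of_check
    [4369]
    [4680, 5250, 6180, 8516, 8722, 9256, 10369, 16776, 16929, 17428, 18498, 33058, 33412, 33857,
     34840]
    [4738, 5188, 6184, 8584, 8724, 9250, 10305, 16676, 16968, 17537, 18450, 33090, 33313, 33816,
     34948]
    [4644, 5186, 6280, 8578, 8776, 9249, 10260, 16708, 17025, 17432, 18466, 33064, 33298, 33924,
     34881]
    (by decide +kernel)

lemma td_2 : Fl (part (Fin 4) (Fin 4)) 2 :=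
  fl_of_check
    [8722, 33412]
    [4369, 4680, 5250, 6180, 8516, 9256, 10369, 16776, 16929, 17428, 18498, 33058, 33857, 34840]
    [4488, 4673, 5154, 6164, 8484, 9345, 10312, 16657, 16936, 17476, 18562, 33090, 33816, 34849]
    [4372, 4648, 5186, 6273, 8481, 9352, 10308, 16770, 16961, 17444, 18456, 33096, 33809, 34850]
    (by decide +kernel)

lemma td_16 : Fl (part (Fin 4) (Fin 4)) 16 :=
  fl_of_check
    [4369, 4680, 5250, 6180, 8516, 8722, 9256, 10369, 16776, 16929, 17428, 18498, 33058, 33412,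
     33857, 34840]
    [] [] [] (by decide +kernel)

/-! Designs for the recursion. The one of type `3^4` is a `TD(4,3)`; those of type `3^u` with
`u = 5, 8, 9, 12` come from difference families over `ℤ₁₅`, `ℤ₂₁ ∪ {∞₀, ∞₁, ∞₂}`, `ℤ₃³` and
`ℤ₃₃ ∪ {∞₀, ∞₁, ∞₂}`. -/

lemma R_of_check {u : ℕ} (L : List ℕ) (h : linCheck (u * 3) 3 L = true)
    (h4 : (L.all fun m => (bits (u * 3) m).card == 4) = true) : R u :=
  ⟨_, isDec_of_check L h (by simpa using h4)⟩

/-- The position of `x ∈ ℤ_{3w}`, when the parts are the cosets of the subgroup of order 3. -/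
def pos (w x : ℕ) : ℕ := 3 * (x % w) + x / w % 3

lemma R_four : R 4 :=
  R_of_check ((List.range 9).map fun t =>
      mask [t / 3, 3 + t % 3, 6 + (t / 3 + t) % 3, 9 + (t / 3 + 2 * t) % 3])
    (by decide +kernel) (by decide +kernel)

lemma R_five : R 5 :=
  R_of_check ((List.range 15).map fun t => mask ([0, 1, 3, 7].map fun a => pos 5 (a + t)))
    (by decide +kernel) (by decide +kernel)

lemma R_eight : R 8 :=
  R_of_check ((List.range 21).flatMap fun t =>
      [mask ((21 + t % 3) :: [0, 1, 5].map fun a => pos 7 (a + t)),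
        mask ([0, 2, 8, 11].map fun a => pos 7 (a + t))])
    (by decide +kernel) (by decide +kernel)

/-- Addition in `ℤ₃³`, elements being written in base 3. -/
def add27 (a t : ℕ) : ℕ :=
  9 * ((a / 9 + t / 9) % 3) + 3 * ((a / 3 + t / 3) % 3) + (a + t) % 3

lemma R_nine : R 9 :=
  R_of_check ((List.range 27).flatMap fun t =>
      [mask ([0, 3, 9, 13].map fun a => add27 a t), mask ([0, 5, 16, 24].map fun a => add27 a t)])
    (by decide +kernel) (by decide +kernel)

lemma R_twelve : R 12 :=
  R_of_check ((List.range 33).flatMap fun t =>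
      [mask ((33 + t % 3) :: [0, 1, 5].map fun a => pos 11 (a + t)),
        mask ([0, 2, 8, 20].map fun a => pos 11 (a + t)),
        mask ([0, 3, 10, 19].map fun a => pos 11 (a + t))])
    (by decide +kernel) (by decide +kernel)

/-- `TD(4,7)` with a point at infinity added to its groups. -/
lemma R_twentynine (h8 : R 8) : R 29 := by
  let L : List ℕ := ((List.range 49).map fun t =>
      mask [t / 7, 7 + t % 7, 14 + (t / 7 + t) % 7, 21 + (t / 7 + 2 * t) % 7]) ++
    (List.range 4).map fun i => mask (28 :: (List.range 7).map fun x => 7 * i + x)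
  have hL : linCheck 29 1 L = true := by decide +kernel
  have hc : (L.all fun m => (bits 29 m).card == 4 || (bits 29 m).card == 8) = true := by
    decide +kernel
  have := R.pbd (U := Fin 29) (L.toFinset.image (bits 29))
    (fun x y hxy => linCheck_cover hL x y (by simpa [Fin.ext_iff] using hxy)) (by
      intro b hb
      obtain ⟨m, hm, rfl⟩ := Finset.mem_image.1 hb
      rw [List.all_eq_true] at hc
      have := hc m (by simpa using hm)
      rw [Bool.or_eq_true, beq_iff_eq, beq_iff_eq] at this
      rcases this with h | h <;> rw [h]
      · exact R_four
      · exact h8)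
  simpa using this

/-! ### The spectrum of 4-GDDs of type `3^u` -/

lemma R_zero : R 0 := ⟨∅, by simp, by simp, fun x => x.1.elim0⟩

lemma R_one : R 1 := ⟨∅, by simp, by simp, fun _ _ h => absurd (Subsingleton.elim _ _) h⟩

/-- A complete graph decomposed into copies of `K₄` is a linear space with lines of size 4. -/
lemma R.of_design {V : Type} [Fintype V] [DecidableEq V] (h : Dec (⊤ : SimpleGraph V)) :
    R (Fintype.card V) := by
  obtain ⟨B, hB⟩ := h
  refine R.pbd B (fun x y hxy => hB.cover x y hxy) fun b hb => ?_
  rw [hB.card b hb]; exact R_four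

/-- Add a point at infinity to a decomposition of a complete multipartite graph, and fill each part
together with this point. -/
lemma Fl.complete {U W : Type} [Fintype U] [DecidableEq U] [DecidableEq W] {k : ℕ} {l : U → ℕ}
    (h : Fl (part U W) k) (hl : ∀ p, Fl (⊤ : SimpleGraph (Option W)) (l p)) :
    Fl (⊤ : SimpleGraph (Option (U × W))) (k + ∑ p, l p) := by
  -- Piece `none` is the multipartite graph; piece `some p` is the part `p` with the extra point.
  let f : U → Option W ↪ Option (U × W) := fun p =>
    ⟨Option.map fun i => (p, i), Option.map_injective fun i j e => (Prod.ext_iff.1 e).2⟩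
  let G : Option U → SimpleGraph (Option (U × W)) := fun o =>
    match o with
    | none => (part U W).map Function.Embedding.some
    | some p => (⊤ : SimpleGraph (Option W)).map (f p)
  have adj0 : ∀ x y, (G none).Adj x y ↔ ∃ a b, a.1 ≠ b.1 ∧ some a = x ∧ some b = y := by
    intro x y; exact SimpleGraph.map_adj _ _ _ _
  have adj1 : ∀ p x y, (G (some p)).Adj x y ↔ x ≠ y ∧ (∀ a ∈ x, a.1 = p) ∧
      ∀ a ∈ y, a.1 = p := by
    intro p x y
    refine (SimpleGraph.map_adj _ _ _ _).trans ?_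
    constructor
    · rintro ⟨a, b, hab, rfl, rfl⟩
      refine ⟨fun e => hab ((f p).injective e), ?_, ?_⟩
      · cases a <;> simp [f]
      · cases b <;> simp [f]
    · rintro ⟨hxy, hx, hy⟩
      refine ⟨x.map Prod.snd, y.map Prod.snd, fun e => hxy ?_, ?_, ?_⟩
      · rcases x with _ | ⟨a, i⟩ <;> rcases y with _ | ⟨b, j⟩ <;> simp_all
      · rcases x with _ | ⟨a, i⟩ <;> simp_all [f]
      · rcases y with _ | ⟨a, i⟩ <;> simp_all [f]
  have hsum : k + ∑ p, l p = ∑ o : Option U, o.elim k l := by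
    rw [Fintype.sum_option]; rfl
  rw [hsum]
  refine Fl.biUnion Finset.univ G _ ?_ ?_ _ ?_
  · rintro (_ | p) - (_ | q) - x y h1 h2
    · rfl
    · rw [adj0] at h1; rw [adj1] at h2
      obtain ⟨a, b, hab, rfl, rfl⟩ := h1
      exact absurd ((h2.2.1 a rfl).trans (h2.2.2 b rfl).symm) hab
    · rw [adj0] at h2; rw [adj1] at h1
      obtain ⟨a, b, hab, rfl, rfl⟩ := h2
      exact absurd ((h1.2.1 a rfl).trans (h1.2.2 b rfl).symm) hab
    · rw [adj1] at h1 h2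
      rcases x with _ | a
      · rcases y with _ | b
        · exact absurd rfl h1.1
        · rw [← h1.2.2 b rfl, ← h2.2.2 b rfl]
      · rw [← h1.2.1 a rfl, ← h2.2.1 a rfl]
  · rintro (_ | p) -
    · exact Fl.map h _
    · exact Fl.map (hl p) _
  · intro x y
    constructor
    · intro hxy
      have hxy : x ≠ y := hxy
      rcases x with _ | a
      · rcases y with _ | b
        · exact absurd rfl hxy
        · exact ⟨some b.1, by simp, (adj1 _ _ _).2 ⟨hxy, by simp, by simp⟩⟩
      · rcases y with _ | b
        · exact ⟨some a.1, by simp, (adj1 _ _ _).2 ⟨hxy, by simp, by simp⟩⟩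
        · by_cases hab : a.1 = b.1
          · exact ⟨some a.1, by simp, (adj1 _ _ _).2 ⟨hxy, by simp, by simp [hab]⟩⟩
          · exact ⟨none, by simp, (adj0 _ _).2 ⟨a, b, hab, rfl, rfl⟩⟩
    · rintro ⟨i, -, h⟩; exact h.ne

/-- Completing each part of the GDD with a common extra point gives an `S(2,4,3u+1)`, which is
itself a linear space with lines of size 4. -/
lemma R.three_mul_add_one {u : ℕ} (h : R u) : R (3 * u + 1) := by
  obtain ⟨B, hB⟩ := h
  have hK : IsDec (⊤ : SimpleGraph (Option (Fin 3))) {Finset.univ} := by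
    refine ⟨?_, ?_, ?_⟩
    · simp
    · intro b _ x _ y _ hxy; exact hxy
    · intro x y _; exact ⟨Finset.univ, by simp, by simp⟩
  have := R.of_design (hB.fl.complete fun _ => hK.fl).dec
  simpa [mul_comm] using this

/-- There is a transversal design with `k` groups of size `m` given by `k` linear forms
`(x, y) ↦ a i * x + b i * y` over a ring of order `m`, any two of which are independent. -/
def HasTD (k m : ℕ) : Prop :=
  ∃ (A : Type) (_ : CommRing A) (_ : Fintype A), Fintype.card A = m ∧
    ∃ a b : Fin k → A, ∀ i j, i ≠ j → IsUnit (a i * b j - a j * b i)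

lemma HasTD.mul {k m n : ℕ} (h : HasTD k m) (h' : HasTD k n) : HasTD k (m * n) := by
  obtain ⟨A, _, _, rfl, a, b, hab⟩ := h
  obtain ⟨A', _, _, rfl, a', b', hab'⟩ := h'
  refine ⟨A × A', inferInstance, inferInstance, by simp, fun i => (a i, a' i),
    fun i => (b i, b' i), fun i j hij => ?_⟩
  exact Prod.isUnit_iff.2 ⟨hab i j hij, hab' i j hij⟩

lemma HasTD.one (k : ℕ) : HasTD k 1 :=
  ⟨PUnit, inferInstance, inferInstance, by simp, fun _ => 0, fun _ => 0,
    fun _ _ _ => isUnit_of_subsingleton _⟩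

lemma HasTD.primePow {k p n : ℕ} (hp : p.Prime) (hn : n ≠ 0) (h : k ≤ p ^ n) :
    HasTD (k + 1) (p ^ n) := by
  classical
  have := Fact.mk hp
  let _ : Fintype (GaloisField p n) := Fintype.ofFinite _
  have hc : Fintype.card (GaloisField p n) = p ^ n := by
    rw [← Nat.card_eq_fintype_card, GaloisField.card p n hn]
  obtain ⟨s⟩ : Nonempty (Fin k ↪ GaloisField p n) :=
    Function.Embedding.nonempty_of_card_le (by simpa [hc] using h)
  refine ⟨GaloisField p n, inferInstance, inferInstance, hc,
    Fin.cons 0 (fun _ => 1), Fin.cons 1 s, ?_⟩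
  intro i j hij
  rw [isUnit_iff_ne_zero]
  cases i using Fin.cases with
  | zero =>
    cases j using Fin.cases with
    | zero => exact absurd rfl hij
    | succ j => simp
  | succ i =>
    cases j using Fin.cases with
    | zero => simp
    | succ j =>
      simp only [Fin.cons_succ, one_mul, sub_ne_zero]
      intro e
      exact hij (by rw [s.injective e])

/-- If no prime power exactly dividing `m` is 2 or 3, there is a transversal design with 5 groups
of size `m`. -/
lemma hasTD_five (m : ℕ) (hm : m ≠ 0) (h2 : 2 ∣ m → 4 ∣ m) (h3 : 3 ∣ m → 9 ∣ m) : HasTD 5 m := by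
  induction m using Nat.recOnPosPrimePosCoprime with
  | zero => exact absurd rfl hm
  | one => exact HasTD.one 5
  | prime_pow p n hp hn =>
    refine HasTD.primePow hp hn.ne' ?_
    by_contra hlt
    push Not at hlt
    have hpn : p ≤ p ^ n := Nat.le_self_pow hn.ne' p
    have hp2 := hp.two_le
    have h23 : p = 2 ∨ p = 3 := by omega
    have hd : p ∣ p ^ n := dvd_pow_self p hn.ne'
    rcases h23 with rfl | rfl
    · have := Nat.le_of_dvd (by positivity) (h2 hd); omega
    · have := Nat.le_of_dvd (by positivity) (h3 hd); omega
  | coprime a b ha hb hab iha ihb =>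
    refine HasTD.mul (iha (by omega) ?_ ?_) (ihb (by omega) ?_ ?_)
    · intro h
      have := h2 (Dvd.dvd.mul_right h b)
      have hc : Nat.Coprime 4 b := (Nat.Coprime.coprime_dvd_left h hab).pow_left 2
      exact hc.dvd_of_dvd_mul_right this
    · intro h
      have := h3 (Dvd.dvd.mul_right h b)
      have hc : Nat.Coprime 9 b := (Nat.Coprime.coprime_dvd_left h hab).pow_left 2
      exact hc.dvd_of_dvd_mul_right this
    · intro h
      have := h2 (Dvd.dvd.mul_left h a)
      have hc : Nat.Coprime 4 a := (Nat.Coprime.coprime_dvd_left h hab.symm).pow_left 2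
      exact hc.dvd_of_dvd_mul_left this
    · intro h
      have := h3 (Dvd.dvd.mul_left h a)
      have hc : Nat.Coprime 9 a := (Nat.Coprime.coprime_dvd_left h hab.symm).pow_left 2
      exact hc.dvd_of_dvd_mul_left this

/-- Truncate the group `i` of the transversal design given by linear forms to the points of `X i`;
the truncated blocks and groups are the lines of a linear space. -/
lemma R.truncate {A : Type} [CommRing A] [Fintype A] [DecidableEq A] {k : ℕ} (a b : Fin k → A)
    (hab : ∀ i j, i ≠ j → IsUnit (a i * b j - a j * b i)) (X : Fin k → Finset A)
    (hX : ∀ i, R (X i).card)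
    (hl : ∀ x y, R (Finset.univ.filter fun i => a i * x + b i * y ∈ X i).card) :
    R (∑ i, (X i).card) := by
  let U := (i : Fin k) × X i
  let line : A × A → Finset U := fun q => Finset.univ.filter fun p => a p.1 * q.1 + b p.1 * q.2 = p.2
  let grp : Fin k → Finset U := fun i => Finset.univ.filter fun p => p.1 = i
  have hcard : Fintype.card U = ∑ i, (X i).card := by simp [U]
  rw [← hcard]
  refine R.pbd (Finset.univ.image line ∪ Finset.univ.image grp) ?_ ?_
  · rintro ⟨i, x⟩ ⟨j, y⟩ hne
    by_cases hij : i = j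
    · subst hij
      have hxy : (x : A) ≠ y := fun e => hne (by rw [Subtype.ext e])
      refine ⟨grp i, ⟨by simp, by simp [grp], by simp [grp]⟩, ?_⟩
      rintro c ⟨hc, h1, h2⟩
      simp only [Finset.mem_union, Finset.mem_image, Finset.mem_univ, true_and] at hc
      rcases hc with ⟨q, rfl⟩ | ⟨i', rfl⟩
      · simp only [line, Finset.mem_filter, Finset.mem_univ, true_and] at h1 h2
        exact absurd (h1.symm.trans h2) hxy
      · simp only [grp, Finset.mem_filter, Finset.mem_univ, true_and] at h1
        rw [h1]
    · -- Two points in different groups determine the parameters of their line by Cramer's rule.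
      obtain ⟨d, hd⟩ := hab i j hij
      have e1 : (↑d⁻¹ : A) * (a i * b j - a j * b i) = 1 := by rw [← hd]; exact d.inv_mul
      refine ⟨line (d⁻¹ * (x * b j - y * b i), d⁻¹ * (a i * y - a j * x)), ⟨by simp, ?_, ?_⟩, ?_⟩
      · simp only [line, Finset.mem_filter, Finset.mem_univ, true_and]
        linear_combination (x : A) * e1
      · simp only [line, Finset.mem_filter, Finset.mem_univ, true_and]
        linear_combination (y : A) * e1
      · rintro c ⟨hc, h1, h2⟩
        simp only [Finset.mem_union, Finset.mem_image, Finset.mem_univ, true_and] at hc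
        rcases hc with ⟨⟨r, s⟩, rfl⟩ | ⟨i', rfl⟩
        · simp only [line, Finset.mem_filter, Finset.mem_univ, true_and] at h1 h2
          congr 1
          rw [← h1, ← h2]
          ext
          · linear_combination (-r) * e1
          · linear_combination (-s) * e1
        · simp only [grp, Finset.mem_filter, Finset.mem_univ, true_and] at h1 h2
          exact absurd (h1.trans h2.symm) hij
  · intro c hc
    simp only [Finset.mem_union, Finset.mem_image, Finset.mem_univ, true_and] at hc
    rcases hc with ⟨⟨x, y⟩, rfl⟩ | ⟨i, rfl⟩
    · have : (line (x, y)).card =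
          (Finset.univ.filter fun i => a i * x + b i * y ∈ X i).card := by
        refine Finset.card_bij (fun p _ => p.1) ?_ ?_ ?_
        · rintro ⟨i, z⟩ hp
          simp only [line, Finset.mem_filter, Finset.mem_univ, true_and] at hp ⊢
          rw [hp]; exact z.2
        · rintro ⟨i, z⟩ hp ⟨j, w⟩ hq e
          simp only [line, Finset.mem_filter, Finset.mem_univ, true_and] at hp hq e
          subst e
          rw [Subtype.ext (hp.symm.trans hq)]
        · intro i hi
          simp only [Finset.mem_filter, Finset.mem_univ, true_and] at hi
          exact ⟨⟨i, ⟨_, hi⟩⟩, by simp [line], rfl⟩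
      rw [this]; exact hl x y
    · have : (grp i).card = (X i).card := by
        rw [← Fintype.card_coe (X i), ← Finset.card_univ]
        symm
        refine Finset.card_bij (fun z _ => ⟨i, z⟩) ?_ ?_ ?_
        · intro z _; simp [grp]
        · intro z _ w _ e; exact eq_of_heq (Sigma.mk.inj e).2
        · rintro ⟨j, z⟩ hp
          simp only [grp, Finset.mem_filter, Finset.mem_univ, true_and] at hp
          subst hp
          exact ⟨z, by simp, rfl⟩
      rw [this]; exact hX i

lemma R.four_mul {m : ℕ} (h : HasTD 4 m) (hm : R m) : R (4 * m) := by
  classical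
  obtain ⟨A, _, _, rfl, a, b, hab⟩ := h
  have := R.truncate a b hab (fun _ => Finset.univ) (by intro i; exact hm)
    (by intro x y; simpa using R_four)
  simpa using this

lemma R.four_mul_add {m s : ℕ} (h : HasTD 5 m) (hs : s ≤ m) (hm : R m) (hs' : R s) :
    R (4 * m + s) := by
  classical
  obtain ⟨A, _, _, rfl, a, b, hab⟩ := h
  obtain ⟨S, -, hS⟩ := Finset.exists_subset_card_eq (s := (Finset.univ : Finset A)) hs
  have := R.truncate a b hab ![Finset.univ, Finset.univ, Finset.univ, Finset.univ, S]
    (by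
      intro i
      fin_cases i
      · exact hm
      · exact hm
      · exact hm
      · exact hm
      · change R S.card; rw [hS]; exact hs')
    (by
      intro x y
      rw [Finset.card_filter, Fin.sum_univ_five]
      by_cases hxy : a 4 * x + b 4 * y ∈ S
      · simpa [hxy] using R_five
      · simpa [hxy] using R_four)
  rw [Fin.sum_univ_five] at this
  have e : 4 * Fintype.card A + s = Fintype.card A + Fintype.card A + Fintype.card A +
    Fintype.card A + s := by ring
  rw [e, ← hS]
  simpa using this

lemma hasTD_four_twelve : HasTD 4 12 :=
  HasTD.mul (m := 3) (n := 4) (HasTD.primePow (p := 3) (n := 1) Nat.prime_three one_ne_zero le_rfl)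
    (HasTD.primePow (p := 2) (n := 2) Nat.prime_two two_ne_zero (by norm_num))

/-- Every `u ≡ 0, 1 (mod 4)` with `u ≥ 16`, except for the orders listed, is of the form `4m + s`
with `s ≤ m`, `m ≡ 0, 1 (mod 4)`, where 3 does not exactly divide `m`; thus `hasTD_five` applies
to `m`. -/
lemma exists_split (u : ℕ) (hmod : u % 4 = 0 ∨ u % 4 = 1) (h : 16 ≤ u)
    (hx : u ≠ 28 ∧ u ≠ 29 ∧ u ≠ 48 ∧ u ≠ 49) :
    ∃ m s, u = 4 * m + s ∧ s ≤ m ∧ 0 < m ∧ (m % 4 = 0 ∨ m % 4 = 1) ∧ m % 9 ≠ 3 ∧ m % 9 ≠ 6 := by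
  suffices H : ∃ m, 4 * m ≤ u ∧ u ≤ 5 * m ∧ 0 < m ∧ (m % 4 = 0 ∨ m % 4 = 1) ∧
      m % 9 ≠ 3 ∧ m % 9 ≠ 6 by
    obtain ⟨m, h1, h2, h3⟩ := H
    exact ⟨m, u - 4 * m, by omega, by omega, h3⟩
  by_cases h100 : u < 100
  · have : u ≤ 20 ∨ (20 ≤ u ∧ u ≤ 25) ∨ (32 ≤ u ∧ u ≤ 40) ∨ (36 ≤ u ∧ u ≤ 45) ∨
        (52 ≤ u ∧ u ≤ 65) ∨ (64 ≤ u ∧ u ≤ 80) ∨ (80 ≤ u ∧ u ≤ 100) := by omega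
    rcases this with h | h | h | h | h | h | h
    · exact ⟨4, by omega⟩
    · exact ⟨5, by omega⟩
    · exact ⟨8, by omega⟩
    · exact ⟨9, by omega⟩
    · exact ⟨13, by omega⟩
    · exact ⟨16, by omega⟩
    · exact ⟨20, by omega⟩
  · -- Among any five consecutive integers there is a suitable `m`.
    have key : ∀ q, 4 ≤ q → ∃ m, m ≤ q ∧ q ≤ m + 4 ∧ (m % 4 = 0 ∨ m % 4 = 1) ∧
        m % 9 ≠ 3 ∧ m % 9 ≠ 6 := by
      intro q hq
      have hr : ∀ r < 36, ∃ d ≤ 4, ((r + 36 - d) % 4 = 0 ∨ (r + 36 - d) % 4 = 1) ∧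
          (r + 36 - d) % 9 ≠ 3 ∧ (r + 36 - d) % 9 ≠ 6 := by decide
      obtain ⟨d, hd, h⟩ := hr (q % 36) (Nat.mod_lt _ (by norm_num))
      have e4 : (q % 36 + 36 - d) % 4 = (q - d) % 4 := by omega
      have e9 : (q % 36 + 36 - d) % 9 = (q - d) % 9 := by omega
      rw [e4, e9] at h
      exact ⟨q - d, by omega, by omega, h⟩
    obtain ⟨m, h1, h2, h3⟩ := key (u / 4) (by omega)
    exact ⟨m, by omega, by omega, by omega, h3⟩

theorem R_all (u : ℕ) (hmod : u % 4 = 0 ∨ u % 4 = 1) : R u := by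
  induction u using Nat.strong_induction_on with
  | _ u ih =>
  by_cases h16 : u < 16
  · have : u = 0 ∨ u = 1 ∨ u = 4 ∨ u = 5 ∨ u = 8 ∨ u = 9 ∨ u = 12 ∨ u = 13 := by omega
    rcases this with rfl | rfl | rfl | rfl | rfl | rfl | rfl | rfl
    · exact R_zero
    · exact R_one
    · exact R_four
    · exact R_five
    · exact R_eight
    · exact R_nine
    · exact R_twelve
    · exact R_four.three_mul_add_one
  by_cases h28 : u = 28
  · subst h28; exact R_nine.three_mul_add_one
  by_cases h29 : u = 29
  · subst h29; exact R_twentynine R_eight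
  by_cases h48 : u = 48
  · subst h48; exact R.four_mul hasTD_four_twelve R_twelve
  by_cases h49 : u = 49
  · subst h49; exact (ih 16 (by omega) (by omega)).three_mul_add_one
  obtain ⟨m, s, rfl, hs, hm, hm4, hm3, hm6⟩ :=
    exists_split u hmod (by omega) ⟨h28, h29, h48, h49⟩
  exact R.four_mul_add (hasTD_five m hm.ne' (by omega) (by omega)) hs
    (ih m (by omega) hm4) (ih s (by omega) (by omega))

/-! ### Assembling the designs of order `12u + 1` -/

/-- Multiply all points by `T`, replacing each block `b` by transversal designs on `b × T`. -/
lemma Fl.inflate {U W T : Type} [DecidableEq U] [DecidableEq W] [DecidableEq T]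
    {B : Finset (Finset (U × W))} (hB : IsDec (part U W) B) (k : Finset (U × W) → ℕ)
    (h : ∀ b ∈ B, Fl (part (Fin 4) T) (k b)) : Fl (part U (W × T)) (∑ b ∈ B, k b) := by
  let f : (b : Finset (U × W)) → (b × T) ↪ (U × (W × T)) := fun b =>
    ⟨fun x => (x.1.1.1, (x.1.1.2, x.2)), by
      rintro ⟨⟨⟨p, w⟩, hb⟩, t⟩ ⟨⟨⟨p', w'⟩, hb'⟩, t'⟩ e
      simp only [Prod.mk.injEq] at e
      obtain ⟨rfl, rfl, rfl⟩ := e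
      rfl⟩
  have adj : ∀ b ∈ B, ∀ x y : U × (W × T), ((part b T).map (f b)).Adj x y ↔
      (x.1, x.2.1) ∈ b ∧ (y.1, y.2.1) ∈ b ∧ x.1 ≠ y.1 := by
    intro b hb x y
    rw [SimpleGraph.map_adj]
    constructor
    · rintro ⟨⟨⟨p, hp⟩, s⟩, ⟨⟨q, hq⟩, t⟩, hpq, rfl, rfl⟩
      exact ⟨hp, hq, hB.clique b hb p hp q hq fun e => hpq (Subtype.ext e)⟩
    · rintro ⟨hx, hy, hxy⟩
      exact ⟨⟨⟨_, hx⟩, x.2.2⟩, ⟨⟨_, hy⟩, y.2.2⟩,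
        fun e => hxy (congrArg (fun z : b => z.1.1) e), rfl, rfl⟩
  refine Fl.biUnion B (fun b => (part b T).map (f b)) k ?_ ?_ _ ?_
  · intro b hb c hc x y h1 h2
    rw [adj b hb] at h1
    rw [adj c hc] at h2
    exact (hB.cover (x.1, x.2.1) (y.1, y.2.1) h1.2.2).unique ⟨hb, h1.1, h1.2.1⟩
      ⟨hc, h2.1, h2.2.1⟩
  · intro b hb
    refine Fl.map (Fl.iso (h b hb) (partIso (Fintype.equivOfCardEq ?_) (Equiv.refl _))) _
    rw [Fintype.card_coe, hB.card b hb, Fintype.card_fin]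
  · intro x y
    constructor
    · intro hxy
      obtain ⟨b, ⟨hb, hx, hy⟩, -⟩ := hB.cover (x.1, x.2.1) (y.1, y.2.1) hxy
      exact ⟨b, hb, (adj b hb x y).2 ⟨hx, hy, hxy⟩⟩
    · rintro ⟨b, hb, hxy⟩
      exact ((adj b hb x y).1 hxy).2.2

/-- Relabelling the points of a complete graph. -/
def topIso {V W : Type} (e : V ≃ W) : (⊤ : SimpleGraph V) ≃g (⊤ : SimpleGraph W) where
  toEquiv := e
  map_rel_iff' := by intro a b; simp

lemma fl_plane {k : ℕ} (hk : k ≤ 5 ∨ k = 13) :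
    Fl (⊤ : SimpleGraph (Option (Fin 3 × Fin 4))) k := by
  have h : Fl (part (Fin 13) (Fin 1)) k := by
    have : k = 0 ∨ k = 1 ∨ k = 2 ∨ k = 3 ∨ k = 4 ∨ k = 5 ∨ k = 13 := by omega
    rcases this with rfl | rfl | rfl | rfl | rfl | rfl | rfl
    · exact plane_0
    · exact plane_1
    · exact plane_2
    · exact plane_3
    · exact plane_4
    · exact plane_5
    · exact plane_13
  have e : part (Fin 13) (Fin 1) ≃g (⊤ : SimpleGraph (Fin 13)) :=
    { toEquiv := Equiv.prodUnique _ _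
      map_rel_iff' := by intro a b; simp [part_adj] }
  exact (h.iso e).iso (topIso (Fintype.equivOfCardEq (by simp)))

lemma fl_td {k : ℕ} (hk : k ≤ 2 ∨ k = 16) : Fl (part (Fin 4) (Fin 4)) k := by
  have : k = 0 ∨ k = 1 ∨ k = 2 ∨ k = 16 := by omega
  rcases this with rfl | rfl | rfl | rfl
  · exact td_0
  · exact td_1
  · exact td_2
  · exact td_16

lemma exists_sum_update {ι : Type} [DecidableEq ι] {P : ℕ → Prop} {s : Finset ι} {a : ι}
    (ha : a ∉ s) {c n : ℕ} (hc : P c) (h : ∃ f : ι → ℕ, (∀ i, P (f i)) ∧ ∑ i ∈ s, f i = n) :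
    ∃ f : ι → ℕ, (∀ i, P (f i)) ∧ ∑ i ∈ insert a s, f i = c + n := by
  obtain ⟨f, hf, rfl⟩ := h
  refine ⟨Function.update f a c, ?_, ?_⟩
  · intro i
    by_cases hi : i = a
    · subst hi; simpa using hc
    · simpa [hi] using hf i
  · rw [Finset.sum_insert ha, Function.update_self, Finset.sum_update_of_notMem ha]

/-- The sums of `|s| ≥ 2` elements of `{0, …, 5, 13}` are all numbers up to the maximum `N = 13|s|`
except `N - 1, …, N - 7`, `N - 14` and `N - 15`. -/
lemma exists_sum_plane {ι : Type} [DecidableEq ι] (s : Finset ι) (hs : 2 ≤ s.card) (n : ℕ)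
    (hn : n + 16 ≤ 13 * s.card ∨ (13 * s.card ≤ n + 13 ∧ n + 8 ≤ 13 * s.card) ∨
      n = 13 * s.card) :
    ∃ f : ι → ℕ, (∀ i, f i ≤ 5 ∨ f i = 13) ∧ ∑ i ∈ s, f i = n := by
  induction s using Finset.induction_on generalizing n with
  | empty => simp at hs
  | insert a s ha ih =>
    rw [Finset.card_insert_of_notMem ha] at hs hn
    by_cases h1 : s.card = 1
    · obtain ⟨b, rfl⟩ := Finset.card_eq_one.1 h1
      have : ∃ c d : ℕ, (c ≤ 5 ∨ c = 13) ∧ (d ≤ 5 ∨ d = 13) ∧ n = c + d := by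
        rw [h1] at hn
        by_cases h5 : n ≤ 5
        · exact ⟨0, n, by omega⟩
        by_cases h10 : n ≤ 10
        · exact ⟨5, n - 5, by omega⟩
        by_cases h18 : n ≤ 18
        · exact ⟨13, n - 13, by omega⟩
        · exact ⟨13, 13, by omega⟩
      obtain ⟨c, d, hc, hd, rfl⟩ := this
      exact exists_sum_update (P := fun t => t ≤ 5 ∨ t = 13) ha hc ⟨fun _ => d, fun _ => hd, by simp⟩
    · have : ∃ c m : ℕ, (c ≤ 5 ∨ c = 13) ∧ n = c + m ∧ (m + 16 ≤ 13 * s.card ∨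
          (13 * s.card ≤ m + 13 ∧ m + 8 ≤ 13 * s.card) ∨ m = 13 * s.card) := by
        by_cases h13 : 13 ≤ n
        · exact ⟨13, n - 13, by omega⟩
        · by_cases h5 : 5 ≤ n
          · exact ⟨5, n - 5, by omega⟩
          · exact ⟨0, n, by omega⟩
      obtain ⟨c, m, hc, rfl, hm⟩ := this
      exact exists_sum_update (P := fun t => t ≤ 5 ∨ t = 13) ha hc (ih (by omega) m hm)

/-- Adding at least one summand from `{0, 1, 2, 16}` closes the gaps at `M - 14` and `M - 15` that
sums `m` of elements of `{0, …, 5, 13}` leave just below their maximum `M`. -/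
lemma exists_sum_td {ι : Type} [DecidableEq ι] (s : Finset ι) (hs : s.Nonempty) (M : ℕ)
    (hM : 32 ≤ M) (n : ℕ) (hn : n + 8 ≤ 16 * s.card + M ∨ n = 16 * s.card + M) :
    ∃ m, (m + 16 ≤ M ∨ (M ≤ m + 13 ∧ m + 8 ≤ M) ∨ m = M) ∧
      ∃ f : ι → ℕ, (∀ i, f i ≤ 2 ∨ f i = 16) ∧ ∑ i ∈ s, f i + m = n := by
  induction hs using Finset.Nonempty.cons_induction generalizing n with
  | singleton a =>
    rw [Finset.card_singleton] at hn
    have : ∃ c m : ℕ, (c ≤ 2 ∨ c = 16) ∧ c + m = n ∧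
        (m + 16 ≤ M ∨ (M ≤ m + 13 ∧ m + 8 ≤ M) ∨ m = M) := by
      by_cases h1 : n = M + 1
      · exact ⟨1, M, by omega⟩
      by_cases h2 : n = M + 2
      · exact ⟨2, M, by omega⟩
      by_cases h16 : 16 ≤ n
      · exact ⟨16, n - 16, by omega⟩
      · exact ⟨0, n, by omega⟩
    obtain ⟨c, m, hc, hn, hm⟩ := this
    exact ⟨m, hm, fun _ => c, fun _ => hc, by simpa using hn⟩
  | cons a s ha hs ih =>
    rw [Finset.card_cons] at hn
    have : ∃ c n' : ℕ, (c ≤ 2 ∨ c = 16) ∧ n = c + n' ∧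
        (n' + 8 ≤ 16 * s.card + M ∨ n' = 16 * s.card + M) := by
      by_cases h16 : 16 ≤ n
      · exact ⟨16, n - 16, by omega⟩
      · exact ⟨0, n, by omega⟩
    obtain ⟨c, n', hc, rfl, hn'⟩ := this
    obtain ⟨m, hm, f, hf, hfm⟩ := ih n' hn'
    obtain ⟨g, hg, hgs⟩ := exists_sum_update (P := fun t => t ≤ 2 ∨ t = 16) ha hc ⟨f, hf, rfl⟩
    refine ⟨m, hm, g, hg, ?_⟩
    rw [Finset.cons_eq_insert, hgs]
    omega

/-- Count ordered pairs of adjacent vertices, 12 in each block. -/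
lemma IsDec.card_mul {V : Type} [Fintype V] [DecidableEq V] {G : SimpleGraph V}
    [DecidableRel G.Adj] {B : Finset (Finset V)} (h : IsDec G B) (d : ℕ)
    (hd : ∀ x, (Finset.univ.filter fun y => G.Adj x y).card = d) :
    B.card * 12 = Fintype.card V * d := by
  have e : (Finset.univ.filter fun q : V × V => G.Adj q.1 q.2) = B.biUnion Finset.offDiag := by
    ext ⟨x, y⟩
    simp only [Finset.mem_offDiag, Finset.mem_filter, Finset.mem_univ, true_and,
      Finset.mem_biUnion]
    constructor
    · intro hxy
      obtain ⟨b, ⟨hb, hx, hy⟩, -⟩ := h.cover x y hxy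
      exact ⟨b, hb, hx, hy, hxy.ne⟩
    · rintro ⟨b, hb, hx, hy, hxy⟩; exact h.clique b hb x hx y hy hxy
  have hcard := congrArg Finset.card e
  rw [Finset.card_biUnion] at hcard
  · rw [Finset.sum_const_nat (m := 12) fun b hb => by
      rw [Finset.offDiag_card, h.card b hb]] at hcard
    rw [← hcard, Finset.card_filter, Fintype.sum_prod_type]
    simp only [← Finset.card_filter, hd]
    simp
  · intro b hb c hc hbc
    refine Finset.disjoint_left.2 ?_
    rintro ⟨x, y⟩ hxy hxy'
    rw [Finset.mem_offDiag] at hxy hxy'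
    exact hbc ((h.cover x y (h.clique b hb x hxy.1 y hxy.2.1 hxy.2.2)).unique
      ⟨hb, hxy.1, hxy.2.1⟩ ⟨hc, hxy'.1, hxy'.2.1⟩)

/-- Inflate a 4-GDD of type `3^u` by 4 and fill the groups, of size 12, with planes of order 3 on
the group and a point at infinity. -/
theorem fl_top (u : ℕ) (hmod : u % 4 = 0 ∨ u % 4 = 1) (h4 : 4 ≤ u) (k : ℕ)
    (hk : k + 8 ≤ (12 * u + 1) * u ∨ k = (12 * u + 1) * u) :
    Fl (⊤ : SimpleGraph (Fin (12 * u + 1))) k := by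
  obtain ⟨B, hB⟩ := R_all u hmod
  have e : Option (Fin u × (Fin 3 × Fin 4)) ≃ Fin (12 * u + 1) :=
    Fintype.equivOfCardEq (by simp; ring)
  have glue : ∀ (f : Finset (Fin u × Fin 3) → ℕ) (g : Fin u → ℕ), (∀ b, f b ≤ 2 ∨ f b = 16) →
      (∀ p, g p ≤ 5 ∨ g p = 13) →
      Fl (⊤ : SimpleGraph (Fin (12 * u + 1))) (∑ b ∈ B, f b + ∑ p, g p) := fun f g hf hg =>
    ((Fl.inflate hB f fun b _ => fl_td (hf b)).complete fun p => fl_plane (hg p)).iso (topIso e)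
  have hne : B.Nonempty := by
    obtain ⟨b, hb, -⟩ := hB.cover (⟨0, by omega⟩, 0) (⟨1, by omega⟩, 0) (by simp [part_adj])
    exact ⟨b, hb.1⟩
  have hcount : 16 * B.card + 13 * u = (12 * u + 1) * u := by
    classical
    have := hB.card_mul ((u - 1) * 3) (by
      intro x
      have : (Finset.univ.filter fun y => (part (Fin u) (Fin 3)).Adj x y) =
          Finset.univ.erase x.1 ×ˢ Finset.univ := by
        ext y
        simp [part_adj, eq_comm]
      rw [this, Finset.card_product, Finset.card_erase_of_mem (Finset.mem_univ _)]
      simp)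
    rw [Fintype.card_prod, Fintype.card_fin, Fintype.card_fin] at this
    obtain ⟨w, rfl⟩ : ∃ w, u = w + 1 := ⟨u - 1, by omega⟩
    simp only [Nat.add_sub_cancel] at this
    nlinarith
  obtain ⟨m, hm, f, hf, hfm⟩ := exists_sum_td B hne (13 * u) (by omega) k (by omega)
  obtain ⟨g, hg, hgm⟩ := exists_sum_plane (Finset.univ : Finset (Fin u))
    (by simp; omega) m (by simpa using hm)
  rw [← hfm, ← hgm]
  exact glue f g hf hg

/-! ### Three-way trades have at least 8 blocks -/

set_option synthInstance.maxHeartbeats 200000 in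
set_option synthInstance.maxSize 1000 in
/-- The finite check behind `cross_pairs`: `ra, …, rf` and `sa, …, sf` are the indicators of the
triples `r` and `s` on the points `a, b, c` of `P` and `d, e, f` of `Q`. -/
lemma cross_pairs_bool : ∀ ra rb rc rd re rf sa sb sc sd se sf : Bool,
    (!(ra.toNat + rb.toNat + rc.toNat + rd.toNat + re.toNat + rf.toNat == 3 &&
      sa.toNat + sb.toNat + sc.toNat + sd.toNat + se.toNat + sf.toNat == 3 &&
      !(ra == rb && rb == rc) && !(sa == sb && sb == sc) &&
      !(ra == sa && rb == sb && rc == sc && rd == sd && re == se && rf == sf) &&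
      !(ra == !sa && rb == !sb && rc == !sc && rd == !sd && re == !se && rf == !sf)) ||
    Nat.ble 6 ((ra == rd || sa == sd).toNat + (ra == re || sa == se).toNat +
      (ra == rf || sa == sf).toNat + ((rb == rd || sb == sd).toNat +
      (rb == re || sb == se).toNat + (rb == rf || sb == sf).toNat) +
      ((rc == rd || sc == sd).toNat + (rc == re || sc == se).toNat +
      (rc == rf || sc == sf).toNat))) = true := by
  decide +kernel

/-- Two splittings `r`, `s` of a six-element set `P ∪ Q` into triples, different from each other
and from `P | Q`, join at least six of the nine pairs between `P` and `Q`. -/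
lemma cross_pairs {V : Type} [DecidableEq V] {P Q r s : Finset V} (hP : P.card = 3)
    (hQ : Q.card = 3) (hPQ : Disjoint P Q) (hr : r ⊆ P ∪ Q) (hs : s ⊆ P ∪ Q) (hr3 : r.card = 3)
    (hs3 : s.card = 3) (hrP : r ≠ P) (hrQ : r ≠ Q) (hsP : s ≠ P) (hsQ : s ≠ Q) (hrs : r ≠ s)
    (hrs' : r ≠ (P ∪ Q) \ s) :
    6 ≤ ((P ×ˢ Q).filter fun q => (q.1 ∈ r ↔ q.2 ∈ r) ∨ (q.1 ∈ s ↔ q.2 ∈ s)).card := by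
  obtain ⟨a, b, c, hab, hac, hbc, rfl⟩ := Finset.card_eq_three.1 hP
  obtain ⟨d, e, f, hde, hdf, hef, rfl⟩ := Finset.card_eq_three.1 hQ
  have count : ∀ t : Finset V, t ⊆ {a, b, c} ∪ {d, e, f} → t.card = 3 →
      (decide (a ∈ t)).toNat + (decide (b ∈ t)).toNat + (decide (c ∈ t)).toNat +
      (decide (d ∈ t)).toNat + (decide (e ∈ t)).toNat + (decide (f ∈ t)).toNat = 3 := by
    intro t ht ht3
    have h1 : t = ({a, b, c} ∪ {d, e, f} : Finset V).filter (· ∈ t) := by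
      rw [Finset.filter_mem_eq_inter, Finset.inter_eq_right.2 ht]
    rw [h1, Finset.card_filter, Finset.sum_union hPQ] at ht3
    rw [Finset.sum_insert (by simp [hab, hac]), Finset.sum_insert (by simp [hbc]),
      Finset.sum_singleton, Finset.sum_insert (by simp [hde, hdf]),
      Finset.sum_insert (by simp [hef]), Finset.sum_singleton] at ht3
    simp only [Bool.toNat, Bool.cond_decide]
    omega
  have split : ∀ t : Finset V, t ⊆ {a, b, c} ∪ {d, e, f} → t.card = 3 → t ≠ {a, b, c} →
      t ≠ {d, e, f} → ¬ ((a ∈ t ↔ b ∈ t) ∧ (b ∈ t ↔ c ∈ t)) := by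
    rintro t ht ht3 h1 h2 ⟨h3, h4⟩
    by_cases ha : a ∈ t
    · refine h1 (Finset.eq_of_subset_of_card_le ?_ (by omega)).symm
      intro y hy
      simp only [Finset.mem_insert, Finset.mem_singleton] at hy
      rcases hy with rfl | rfl | rfl <;> tauto
    · refine h2 (Finset.eq_of_subset_of_card_le ?_ (by omega))
      intro y hy
      have := ht hy
      simp only [Finset.mem_union, Finset.mem_insert, Finset.mem_singleton] at this ⊢
      rcases this with (rfl | rfl | rfl) | h <;> tauto
  have ne1 : ¬ ((a ∈ r ↔ a ∈ s) ∧ (b ∈ r ↔ b ∈ s) ∧ (c ∈ r ↔ c ∈ s) ∧ (d ∈ r ↔ d ∈ s) ∧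
      (e ∈ r ↔ e ∈ s) ∧ (f ∈ r ↔ f ∈ s)) := by
    rintro ⟨h1, h2, h3, h4, h5, h6⟩
    apply hrs
    ext y
    constructor
    · intro hy
      have := hr hy
      simp only [Finset.mem_union, Finset.mem_insert, Finset.mem_singleton] at this
      rcases this with (rfl | rfl | rfl) | (rfl | rfl | rfl)
      exacts [h1.1 hy, h2.1 hy, h3.1 hy, h4.1 hy, h5.1 hy, h6.1 hy]
    · intro hy
      have := hs hy
      simp only [Finset.mem_union, Finset.mem_insert, Finset.mem_singleton] at this
      rcases this with (rfl | rfl | rfl) | (rfl | rfl | rfl)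
      exacts [h1.2 hy, h2.2 hy, h3.2 hy, h4.2 hy, h5.2 hy, h6.2 hy]
  have ne2 : ¬ ((a ∈ r ↔ a ∉ s) ∧ (b ∈ r ↔ b ∉ s) ∧ (c ∈ r ↔ c ∉ s) ∧ (d ∈ r ↔ d ∉ s) ∧
      (e ∈ r ↔ e ∉ s) ∧ (f ∈ r ↔ f ∉ s)) := by
    rintro ⟨h1, h2, h3, h4, h5, h6⟩
    apply hrs'
    ext y
    rw [Finset.mem_sdiff]
    constructor
    · intro hy
      refine ⟨hr hy, ?_⟩
      have := hr hy
      simp only [Finset.mem_union, Finset.mem_insert, Finset.mem_singleton] at this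
      rcases this with (rfl | rfl | rfl) | (rfl | rfl | rfl)
      exacts [h1.1 hy, h2.1 hy, h3.1 hy, h4.1 hy, h5.1 hy, h6.1 hy]
    · rintro ⟨hy, hys⟩
      simp only [Finset.mem_union, Finset.mem_insert, Finset.mem_singleton] at hy
      rcases hy with (rfl | rfl | rfl) | (rfl | rfl | rfl)
      exacts [h1.2 hys, h2.2 hys, h3.2 hys, h4.2 hys, h5.2 hys, h6.2 hys]
  have key := cross_pairs_bool (decide (a ∈ r)) (decide (b ∈ r)) (decide (c ∈ r)) (decide (d ∈ r))
    (decide (e ∈ r)) (decide (f ∈ r)) (decide (a ∈ s)) (decide (b ∈ s)) (decide (c ∈ s))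
    (decide (d ∈ s)) (decide (e ∈ s)) (decide (f ∈ s))
  rw [count r hr hr3, count s hs hs3] at key
  have b1 := split r hr hr3 hrP hrQ
  have b2 := split s hs hs3 hsP hsQ
  rw [Bool.or_eq_true, Nat.ble_eq, Bool.not_eq_true'] at key
  rcases key with key | key
  · exfalso
    rw [← Bool.not_eq_true] at key
    apply key
    simp only [Bool.and_eq_true, Bool.not_eq_true', ← Bool.not_eq_true, beq_iff_eq,
      decide_eq_decide, ← decide_not]
    exact ⟨⟨⟨⟨⟨trivial, trivial⟩, b1⟩, b2⟩,
      fun h => ne1 ⟨h.1.1.1.1.1, h.1.1.1.1.2, h.1.1.1.2, h.1.1.2, h.1.2, h.2⟩⟩,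
      fun h => ne2 ⟨h.1.1.1.1.1, h.1.1.1.1.2, h.1.1.1.2, h.1.1.2, h.1.2, h.2⟩⟩
  · refine key.trans_eq ?_
    rw [Finset.card_filter, Finset.sum_product]
    have s3 : ∀ (x y z : V) (g : V → ℕ), x ≠ y → x ≠ z → y ≠ z →
        ∑ i ∈ ({x, y, z} : Finset V), g i = g x + g y + g z := by
      intro x y z g h1 h2 h3
      rw [Finset.sum_insert (by simp [h1, h2]), Finset.sum_insert (by simp [h3]),
        Finset.sum_singleton, add_assoc]
    have conv : ∀ x y : V, (decide (x ∈ r) == decide (y ∈ r) || decide (x ∈ s) ==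
        decide (y ∈ s)).toNat = if (x ∈ r ↔ y ∈ r) ∨ (x ∈ s ↔ y ∈ s) then 1 else 0 := by
      intro x y
      by_cases h1 : x ∈ r <;> by_cases h2 : y ∈ r <;> by_cases h3 : x ∈ s <;>
        by_cases h4 : y ∈ s <;> simp [h1, h2, h3, h4]
    rw [s3 a b c _ hab hac hbc, s3 d e f _ hde hdf hef, s3 d e f _ hde hdf hef,
      s3 d e f _ hde hdf hef]
    simp only [conv]

/-- Three pairwise disjoint nonempty sets of 4-blocks covering the same pairs, each pair once,
consist of at least 8 blocks. -/
theorem trade_bound {V : Type} [DecidableEq V] (T : Fin 3 → Finset (Finset V))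
    (h4 : ∀ i, ∀ b ∈ T i, b.card = 4)
    (hu : ∀ i, ∀ b ∈ T i, ∀ c ∈ T i, ∀ x y, x ≠ y → x ∈ b → y ∈ b → x ∈ c → y ∈ c → b = c)
    (hc : ∀ i j, ∀ b ∈ T i, ∀ x ∈ b, ∀ y ∈ b, x ≠ y → ∃ c ∈ T j, x ∈ c ∧ y ∈ c)
    (hd : ∀ i j, i ≠ j → ∀ b ∈ T i, b ∉ T j) (hne : (T 0).Nonempty) : 8 ≤ (T 0).card := by
  -- Each point of the trade lies on two blocks.
  have two : ∀ b ∈ T 0, ∀ x ∈ b, ∃ c ∈ T 0, c ≠ b ∧ x ∈ c := by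
    intro b hb x hx
    obtain ⟨y, hy, hyx⟩ := Finset.exists_mem_ne (by rw [h4 0 b hb]; norm_num : 1 < b.card) x
    obtain ⟨c, hcT, hxc, hyc⟩ := hc 0 1 b hb x hx y hy hyx.symm
    have hcb : ¬ c ⊆ b := by
      intro hsub
      have : c = b := Finset.eq_of_subset_of_card_le hsub (by rw [h4 0 b hb, h4 1 c hcT])
      exact hd 0 1 (by decide) b hb (this ▸ hcT)
    obtain ⟨z, hzc, hzb⟩ := Finset.not_subset.1 hcb
    obtain ⟨b', hb', hxb', hzb'⟩ := hc 1 0 c hcT x hxc z hzc (fun e => hzb (e ▸ hx))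
    exact ⟨b', hb', fun e => hzb (e ▸ hzb'), hxb'⟩
  obtain ⟨P₀, hP₀⟩ := hne
  by_cases h2 : ∃ x ∈ P₀, ((T 0).filter (x ∈ ·)).card ≤ 2
  · obtain ⟨x, hxP₀, hx2⟩ := h2
    have hx2 : ((T 0).filter (x ∈ ·)).card = 2 := by
      obtain ⟨c, hcT, hcP, hxc⟩ := two P₀ hP₀ x hxP₀
      refine le_antisymm hx2 (Finset.one_lt_card.2 ⟨c, ?_, P₀, ?_, hcP⟩)
      · exact Finset.mem_filter.2 ⟨hcT, hxc⟩
      · exact Finset.mem_filter.2 ⟨hP₀, hxP₀⟩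
    obtain ⟨P, Q, hPQ, hfil⟩ := Finset.card_eq_two.1 hx2
    have thru : ∀ c, c ∈ T 0 ∧ x ∈ c ↔ c = P ∨ c = Q := by
      intro c
      rw [← Finset.mem_filter (p := (x ∈ ·)), hfil]
      simp
    obtain ⟨hPT, hxP⟩ := (thru P).2 (Or.inl rfl)
    obtain ⟨hQT, hxQ⟩ := (thru Q).2 (Or.inr rfl)
    have only : ∀ y, y ∈ P → y ∈ Q → y = x := by
      intro y hyP hyQ
      by_contra hyx
      exact hPQ (hu 0 P hPT Q hQT x y (Ne.symm hyx) hxP hyP hxQ hyQ)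
    set P' := P.erase x with hP'
    set Q' := Q.erase x with hQ'
    have hP3 : P'.card = 3 := by rw [hP', Finset.card_erase_of_mem hxP, h4 0 P hPT]
    have hQ3 : Q'.card = 3 := by rw [hQ', Finset.card_erase_of_mem hxQ, h4 0 Q hQT]
    have hdis : Disjoint P' Q' := by
      refine Finset.disjoint_left.2 fun y hy hy' => ?_
      rw [hP', Finset.mem_erase] at hy
      rw [hQ', Finset.mem_erase] at hy'
      exact hy.1 (only y hy.2 hy'.2)
    have hA : (P' ∪ Q').card = 6 := by rw [Finset.card_union_of_disjoint hdis, hP3, hQ3]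
    have hxA : x ∉ P' ∪ Q' := by simp [hP', hQ']
    have sub : ∀ j, ∀ b ∈ T j, x ∈ b → b.erase x ⊆ P' ∪ Q' := by
      intro j b hb hxb y hy
      rw [Finset.mem_erase] at hy
      obtain ⟨c, hcT, hxc, hyc⟩ := hc j 0 b hb x hxb y hy.2 hy.1.symm
      rcases (thru c).1 ⟨hcT, hxc⟩ with rfl | rfl
      · exact Finset.mem_union_left _ (Finset.mem_erase.2 ⟨hy.1, hyc⟩)
      · exact Finset.mem_union_right _ (Finset.mem_erase.2 ⟨hy.1, hyc⟩)
    have sup : ∀ j, ∀ y ∈ P' ∪ Q', ∃ c ∈ T j, x ∈ c ∧ y ∈ c := by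
      intro j y hy
      rcases Finset.mem_union.1 hy with hy | hy
      · rw [hP', Finset.mem_erase] at hy
        exact hc 0 j P hPT x hxP y hy.2 hy.1.symm
      · rw [hQ', Finset.mem_erase] at hy
        exact hc 0 j Q hQT x hxQ y hy.2 hy.1.symm
    -- The blocks of each `T j` through `x` split `P' ∪ Q'` into two triples.
    have halves : ∀ j, ∃ r ⊆ P' ∪ Q', r.card = 3 ∧ insert x r ∈ T j ∧
        insert x ((P' ∪ Q') \ r) ∈ T j := by
      intro j
      obtain ⟨y, hy⟩ : (P' ∪ Q').Nonempty := Finset.card_pos.1 (by omega)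
      obtain ⟨b, hb, hxb, -⟩ := sup j y hy
      have hr3 : (b.erase x).card = 3 := by rw [Finset.card_erase_of_mem hxb, h4 j b hb]
      have hbs := sub j b hb hxb
      have hcomp : ((P' ∪ Q') \ b.erase x).card = 3 := by
        rw [Finset.card_sdiff_of_subset hbs, hA, hr3]
      obtain ⟨z, hz⟩ : ((P' ∪ Q') \ b.erase x).Nonempty := Finset.card_pos.1 (by omega)
      rw [Finset.mem_sdiff] at hz
      obtain ⟨c, hcT, hxc, hzc⟩ := sup j z hz.1
      refine ⟨b.erase x, hbs, hr3, by rwa [Finset.insert_erase hxb], ?_⟩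
      have hce : c.erase x = (P' ∪ Q') \ b.erase x := by
        refine Finset.eq_of_subset_of_card_le ?_ ?_
        · intro w hw
          refine Finset.mem_sdiff.2 ⟨sub j c hcT hxc hw, fun hwb => ?_⟩
          rw [Finset.mem_erase] at hw hwb
          have := hu j b hb c hcT x w hw.1.symm hxb hwb.2 hxc hw.2
          subst this
          exact hz.2 (Finset.mem_erase.2 ⟨fun e => hxA (e ▸ hz.1), hzc⟩)
        · rw [hcomp, Finset.card_erase_of_mem hxc, h4 j c hcT]
      rw [← hce, Finset.insert_erase hxc]
      exact hcT
    obtain ⟨r, hr, hr3, hrT, hrT'⟩ := halves 1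
    obtain ⟨s, hs, hs3, hsT, hsT'⟩ := halves 2
    have hPi : insert x P' = P := Finset.insert_erase hxP
    have hQi : insert x Q' = Q := Finset.insert_erase hxQ
    have six := cross_pairs hP3 hQ3 hdis hr hs hr3 hs3
      (fun e => hd 0 1 (by decide) P hPT (by rw [← hPi, ← e]; exact hrT))
      (fun e => hd 0 1 (by decide) Q hQT (by rw [← hQi, ← e]; exact hrT))
      (fun e => hd 0 2 (by decide) P hPT (by rw [← hPi, ← e]; exact hsT))
      (fun e => hd 0 2 (by decide) Q hQT (by rw [← hQi, ← e]; exact hsT))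
      (fun e => hd 1 2 (by decide) _ hrT (by rw [e]; exact hsT))
      (fun e => hd 1 2 (by decide) _ hrT (by rw [e]; exact hsT'))
    set E := (P' ×ˢ Q').filter fun q => (q.1 ∈ r ↔ q.2 ∈ r) ∨ (q.1 ∈ s ↔ q.2 ∈ s) with hE
    -- A pair between `P'` and `Q'` covered by `T 1` or `T 2` is covered by `T 0`, off `x`.
    have cov : ∀ q ∈ E, ∃ c ∈ T 0, q.1 ∈ c ∧ q.2 ∈ c := by
      rintro ⟨p, q⟩ hpq
      simp only [hE, Finset.mem_filter, Finset.mem_product] at hpq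
      obtain ⟨⟨hp, hq⟩, h⟩ := hpq
      have hpA := Finset.mem_union_left Q' hp
      have hqA := Finset.mem_union_right P' hq
      have hne : p ≠ q := fun e => Finset.disjoint_left.1 hdis hp (e ▸ hq)
      have fin : ∀ j t, insert x t ∈ T j → insert x ((P' ∪ Q') \ t) ∈ T j → (p ∈ t ↔ q ∈ t) →
          ∃ c ∈ T 0, p ∈ c ∧ q ∈ c := by
        intro j t ht ht' hiff
        by_cases hpt : p ∈ t
        · exact hc j 0 _ ht p (Finset.mem_insert_of_mem hpt) q
            (Finset.mem_insert_of_mem (hiff.1 hpt)) hne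
        · exact hc j 0 _ ht' p (Finset.mem_insert_of_mem (Finset.mem_sdiff.2 ⟨hpA, hpt⟩)) q
            (Finset.mem_insert_of_mem (Finset.mem_sdiff.2 ⟨hqA, fun h => hpt (hiff.2 h)⟩)) hne
      rcases h with h | h
      · exact fin 1 r hrT hrT' h
      · exact fin 2 s hsT hsT' h
    have hEm : ∀ q ∈ E, q.1 ∈ P ∧ q.1 ≠ x ∧ q.2 ∈ Q ∧ q.2 ≠ x := by
      intro q hq
      simp only [hE, hP', hQ', Finset.mem_filter, Finset.mem_product, Finset.mem_erase] at hq
      tauto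
    choose! g hgT hg1 hg2 using cov
    have hxg : ∀ q ∈ E, x ∉ g q := by
      intro q hq hx
      obtain ⟨h1, h2, h3, h4⟩ := hEm q hq
      rcases (thru _).1 ⟨hgT q hq, hx⟩ with e | e
      · exact h4 (only _ (e ▸ hg2 q hq) h3)
      · exact h2 (only _ h1 (e ▸ hg1 q hq))
    have hle : E.card ≤ ((T 0).filter (x ∉ ·)).card := by
      refine Finset.card_le_card_of_injOn g ?_ ?_
      · intro q hq
        exact Finset.mem_coe.2 (Finset.mem_filter.2 ⟨hgT q hq, hxg q hq⟩)
      · intro q hq q' hq' e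
        have hq := Finset.mem_coe.1 hq
        have hq' := Finset.mem_coe.1 hq'
        obtain ⟨h1, -, h3, -⟩ := hEm q hq
        obtain ⟨h1', -, h3', -⟩ := hEm q' hq'
        refine Prod.ext ?_ ?_
        · by_contra hne
          have := hu 0 _ (hgT q hq) P hPT q.1 q'.1 hne (hg1 q hq) (e ▸ hg1 q' hq') h1 h1'
          exact hxg q hq (this ▸ hxP)
        · by_contra hne
          have := hu 0 _ (hgT q hq) Q hQT q.2 q'.2 hne (hg2 q hq) (e ▸ hg2 q' hq') h3 h3'
          exact hxg q hq (this ▸ hxQ)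
    have := Finset.card_filter_add_card_filter_not (s := T 0) (x ∈ ·)
    omega
  · -- The other blocks through the four points of `P₀` are pairwise distinct.
    push Not at h2
    have hsub : P₀.biUnion (fun x => ((T 0).filter (x ∈ ·)).erase P₀) ⊆ T 0 := by
      intro b hb
      simp only [Finset.mem_biUnion, Finset.mem_erase, Finset.mem_filter] at hb
      obtain ⟨x, -, -, hb, -⟩ := hb
      exact hb
    have hle := Finset.card_le_card hsub
    rw [Finset.card_biUnion] at hle
    · have : P₀.card * 2 ≤ ∑ x ∈ P₀, (((T 0).filter (x ∈ ·)).erase P₀).card := by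
        rw [← smul_eq_mul]
        refine Finset.card_nsmul_le_sum _ _ _ fun x hx => ?_
        have := h2 x hx
        rw [Finset.card_erase_of_mem (Finset.mem_filter.2 ⟨hP₀, hx⟩)]
        omega
      rw [h4 0 P₀ hP₀] at this
      omega
    · intro x hx y hy hxy
      refine Finset.disjoint_left.2 fun b hb hb' => ?_
      simp only [Finset.mem_erase, Finset.mem_filter] at hb hb'
      exact hb.1 (hu 0 b hb.2.1 P₀ hP₀ x y hxy hb.2.2 hb'.2.2 hx hy)

lemma isDec_of_isS24 {v : ℕ} {B : Finset (Finset (Fin v))} (h : IsS24 Finset.univ B) :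
    IsDec (⊤ : SimpleGraph (Fin v)) B :=
  ⟨fun b hb => (h.1 b hb).2, fun _ _ _ _ _ _ hxy => hxy,
    fun x y hxy => h.2 x y (Finset.mem_univ _) (Finset.mem_univ _) hxy⟩

lemma IsDec.isS24 {v : ℕ} {B : Finset (Finset (Fin v))}
    (h : IsDec (⊤ : SimpleGraph (Fin v)) B) : IsS24 Finset.univ B :=
  ⟨fun b hb => ⟨Finset.subset_univ _, h.card b hb⟩, fun x y _ _ hxy => h.cover x y hxy⟩

lemma mem_J3 {v k : ℕ} : k ∈ J3 v ↔ Fl (⊤ : SimpleGraph (Fin v)) k := by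
  constructor
  · rintro ⟨B1, B2, B3, h1, h2, h3, ⟨e1, e2⟩, hk⟩
    refine ⟨![B1, B2, B3], B1 ∩ B2, ?_, ?_, ?_⟩
    · intro i
      fin_cases i
      · exact isDec_of_isS24 h1
      · exact isDec_of_isS24 h2
      · exact isDec_of_isS24 h3
    · intro i j hij
      fin_cases i <;> fin_cases j <;> first | exact absurd rfl hij | skip
      · rfl
      · exact e1.symm
      · exact Finset.inter_comm _ _
      · exact e2.symm
      · exact (Finset.inter_comm _ _).trans e1.symm
      · exact (Finset.inter_comm _ _).trans e2.symm
    · have : B1 ∩ B2 ⊆ B3 := by rw [e1]; exact Finset.inter_subset_right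
      rw [← hk, Finset.inter_eq_left.2 this]
  · rintro ⟨B, C, hB, hC, rfl⟩
    have h01 := hC 0 1 (by decide)
    have h02 := hC 0 2 (by decide)
    have h12 := hC 1 2 (by decide)
    refine ⟨B 0, B 1, B 2, (hB 0).isS24, (hB 1).isS24, (hB 2).isS24, ⟨?_, ?_⟩, ?_⟩
    · rw [h01, h02]
    · rw [h01, h12]
    · have : C ⊆ B 2 := by rw [← h02]; exact Finset.inter_subset_right
      rw [h01, Finset.inter_eq_left.2 this]

/-- The blocks outside the common part of three decompositions form a three-way trade. -/
lemma Fl.gap {V : Type} [Fintype V] [DecidableEq V] {k : ℕ} (h : Fl (⊤ : SimpleGraph V) k) :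
    ∃ n, n * 12 = Fintype.card V * (Fintype.card V - 1) ∧ (k + 8 ≤ n ∨ k = n) := by
  obtain ⟨B, C, hB, hC, rfl⟩ := h
  refine ⟨(B 0).card, (hB 0).card_mul _ fun x => ?_, ?_⟩
  · have : (Finset.univ.filter fun y => (⊤ : SimpleGraph V).Adj x y) = Finset.univ.erase x := by
      ext y; simp [eq_comm]
    rw [this, Finset.card_erase_of_mem (Finset.mem_univ _), Finset.card_univ]
  have hsub : ∀ i, C ⊆ B i := by
    intro i
    obtain ⟨j, hj⟩ := exists_ne i
    rw [← hC i j hj.symm]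
    exact Finset.inter_subset_left
  have hcard := Finset.card_sdiff_add_card_eq_card (hsub 0)
  by_cases hne : (B 0 \ C).Nonempty
  · left
    have := trade_bound (fun i => B i \ C)
      (fun i b hb => (hB i).card b (Finset.mem_sdiff.1 hb).1)
      (fun i b hb c hc x y hxy hxb hyb hxc hyc => ((hB i).cover x y hxy).unique
        ⟨(Finset.mem_sdiff.1 hb).1, hxb, hyb⟩ ⟨(Finset.mem_sdiff.1 hc).1, hxc, hyc⟩)
      (fun i j b hb x hx y hy hxy => by
        rw [Finset.mem_sdiff] at hb
        obtain ⟨c, ⟨hc, hxc, hyc⟩, -⟩ := (hB j).cover x y hxy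
        refine ⟨c, Finset.mem_sdiff.2 ⟨hc, fun hcC => hb.2 ?_⟩, hxc, hyc⟩
        rw [((hB i).cover x y hxy).unique ⟨hb.1, hx, hy⟩ ⟨hsub i hcC, hxc, hyc⟩]
        exact hcC)
      (fun i j hij b hb hb' => by
        rw [Finset.mem_sdiff] at hb hb'
        exact hb.2 (hC i j hij ▸ Finset.mem_inter.2 ⟨hb.1, hb'.1⟩)) hne
    change 8 ≤ (B 0 \ C).card at this
    omega
  · right
    rw [Finset.not_nonempty_iff_eq_empty] at hne
    rw [hne, Finset.card_empty] at hcard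
    omega

end Flower

/-- for every positive `u ≡ 0, 1 (mod 4)` with `u ≥ 4`,
`J_3[12u+1] = I_3[12u+1]`. -/
theorem stmt14 (u : ℕ) (hu : 0 < u) (hmod : u % 4 = 0 ∨ u % 4 = 1) (h4 : 4 ≤ u) :
    J3 (12 * u + 1) = I3 (12 * u + 1) := by
  have hb : steinerBlockCount (12 * u + 1) = (12 * u + 1) * u := by
    unfold steinerBlockCount
    rw [Nat.add_sub_cancel]
    have : (12 * u + 1) * (12 * u) = (12 * u + 1) * u * 12 := by ring
    rw [this, Nat.mul_div_cancel _ (by norm_num)]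
  have h8 : 8 ≤ (12 * u + 1) * u := by nlinarith
  have hI : ∀ k, k ∈ I3 (12 * u + 1) ↔
      k + 8 ≤ (12 * u + 1) * u ∨ k = (12 * u + 1) * u := by
    intro k
    simp only [I3, hb, Set.mem_sdiff, Set.mem_ofPred_eq, Set.mem_insert_iff,
      Set.mem_singleton_iff]
    generalize (12 * u + 1) * u = N at *
    omega
  ext k
  rw [hI, Flower.mem_J3]
  constructor
  · intro h
    obtain ⟨n, hn, hk⟩ := h.gap
    rw [Fintype.card_fin, Nat.add_sub_cancel] at hn
    have : n = (12 * u + 1) * u := by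
      have e : n * 12 = (12 * u + 1) * u * 12 := by rw [hn]; ring
      omega
    rwa [this] at hk
  · exact Flower.fl_top u hmod h4 k
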